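/- Let K ≥ 1 and η ∈ (0, 1/2] be real numbers, let p and d be positive integers with d ≥ 3, and let Λ ⊆ F_2^n belong to the family 𝚲(2dp). Let Q ⊆ d·̇Λ with |Λ| ≥ 8d², assume p ≥ 2^{50+8d} K^d/η and T_p(Q) ≥ p^{dp}|Q|^p/K^{(d−1)p}. Set M = 2^{13}(8K)^{d−1}. Suppose p ≤ log|Λ|/log log|Λ| and |Q| ≥ 2^{60+50d+2/η} M^{17} K^{2d} p³ d^{−d} |Λ|^{d−1} · max{ (2^{30} M^{11} p)^{ηp} |Λ|^η log|Λ| , exp( log(2^{30} M^{20}) · log((p log M)/log p) / log(2^{−25} η p/M) ) }. Then there exist sets 𝓛, 𝓛' ⊆ Λ and elements λ_1, …, λ_{d−2} ∈ Λ such that 𝓛 ∩ 𝓛' = ∅, λ_i ∉ 𝓛 ∪ 𝓛' for each i, |𝓛| ≥ log( |Q| d^d / (2^{140+80d} K^{3d} |Λ|^{d−1}) ) / (2^{10} log(2^{40} 8^d K^d)), |𝓛'| ≥ (1/(2^{10} p²)) · ( |Q| d^d / (2^{140+80d} K^{3d} |Λ|^{d−1}) )^η, and λ_1 + ⋯ +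 λ_{d−2} + 𝓛 + 𝓛' ⊆ Q. Here log denotes the logarithm to base 2. -/

import Mathlib

open Finset Pointwise

/-- `T_k(A)`: the number of `2k`-tuples `(a_1,…,a_k,a'_1,…,a'_k) ∈ A^{2k}` with
`a_1+⋯+a_k = a'_1+⋯+a'_k`. -/
def addEnergy {G : Type*} [AddCommGroup G] [DecidableEq G] (k : ℕ) (A : Finset G) : ℕ :=
  (((Fintype.piFinset fun _ : Fin k => A) ×ˢ (Fintype.piFinset fun _ : Fin k => A)).filter
    fun v => ∑ i, v.1 i = ∑ i, v.2 i).card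

/-- `Λ` belongs to the family `𝚲(m)`: no nonempty subset of `Λ` of size at most `m`
has zero sum. -/
def InLambdaFamily {G : Type*} [AddCommGroup G] (m : ℕ) (Λ : Finset G) : Prop :=
  ∀ S ⊆ Λ, S.Nonempty → S.card ≤ m → ∑ x ∈ S, x ≠ 0

/-- `d ·̇ Λ`: the set of all sums of `d` pairwise distinct elements of `Λ`. -/
def dDot {G : Type*} [AddCommGroup G] [DecidableEq G] (d : ℕ) (Λ : Finset G) : Finset G :=
  (Λ.powersetCard d).image fun S => ∑ x ∈ S, x


section helpers
set_option linter.unusedSectionVars false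
variable {α : Type*} [DecidableEq α]

/-- average over subsets of `V`. -/
noncomputable def EE (V : Finset α) (f : Finset α → ℝ) : ℝ :=
  (∑ S ∈ V.powerset, f S) / 2 ^ V.card

/-- sign -/
def sg (S : Finset α) (v : α) : ℝ := if v ∈ S then -1 else 1

/-- chaos -/
def FF (Q : Finset (Finset α)) (S : Finset α) : ℝ := ∑ e ∈ Q, ∏ v ∈ e, sg S v

lemma sg_sq (S : Finset α) (v : α) : sg S v * sg S v = 1 := by
  unfold sg; split_ifs <;> norm_num

lemma EE_mono {V : Finset α} {f g : Finset α → ℝ} (h : ∀ S ⊆ V, f S ≤ g S) : EE V f ≤ EE V g := by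
  unfold EE
  gcongr with S hS
  exact h S (mem_powerset.1 hS)

lemma EE_congr {V : Finset α} {f g : Finset α → ℝ} (h : ∀ S ⊆ V, f S = g S) : EE V f = EE V g :=
  le_antisymm (EE_mono fun S hS => (h S hS).le) (EE_mono fun S hS => (h S hS).ge)

lemma EE_const (V : Finset α) (c : ℝ) : EE V (fun _ => c) = c := by
  unfold EE
  simp [card_powerset]

lemma EE_add (V : Finset α) (f g : Finset α → ℝ) :
    EE V (fun S => f S + g S) = EE V f + EE V g := by
  unfold EE; rw [sum_add_distrib, add_div]

lemma EE_mul (V : Finset α) (c : ℝ) (f : Finset α → ℝ) :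
    EE V (fun S => c * f S) = c * EE V f := by
  unfold EE; rw [← mul_sum, mul_div_assoc]

lemma EE_sum {ι : Type*} (V : Finset α) (I : Finset ι) (f : ι → Finset α → ℝ) :
    EE V (fun S => ∑ i ∈ I, f i S) = ∑ i ∈ I, EE V (f i) := by
  unfold EE; rw [sum_comm, sum_div]

lemma EE_nonneg {V : Finset α} {f : Finset α → ℝ} (h : ∀ S ⊆ V, 0 ≤ f S) : 0 ≤ EE V f := by
  have := EE_mono (V := V) (f := fun _ => 0) (g := f) h
  rwa [EE_const] at this

lemma EE_insert {V : Finset α} {v : α} (hv : v ∉ V) (f : Finset α → ℝ) :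
    EE (insert v V) f = EE V (fun S => (f S + f (insert v S)) / 2) := by
  unfold EE
  rw [sum_powerset_insert hv, card_insert_of_notMem hv, ← sum_add_distrib, ← sum_div, pow_succ]
  field_simp

lemma EE_union (U W : Finset α) (h : Disjoint U W) (f : Finset α → ℝ) :
    EE (U ∪ W) f = EE U (fun S => EE W (fun S' => f (S ∪ S'))) := by
  induction U using Finset.induction_on generalizing f with
  | empty => simp [EE]
  | insert v U hv ih =>
    rw [disjoint_insert_left] at h
    rw [insert_union, EE_insert (by simp [hv, h.1]), EE_insert hv, ih h.2]
    refine EE_congr fun S hS => ?_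
    simp only [insert_union, add_div, EE_add]
    simp only [div_eq_inv_mul, EE_mul]

lemma EE_flip {V : Finset α} {v : α} (hv : v ∈ V) (f : Finset α → ℝ) :
    EE V (fun S => f (symmDiff S {v})) = EE V f := by
  unfold EE
  congr 1
  have key : ∀ S ∈ V.powerset, symmDiff S {v} ∈ V.powerset := by
    intro S hS
    rw [mem_powerset] at *
    intro x hx
    rw [mem_symmDiff] at hx
    rcases hx with hx | hx
    · exact hS hx.1
    · have := mem_singleton.1 hx.1
      rwa [this]
  exact sum_nbij' (fun S => symmDiff S {v}) (fun S => symmDiff S {v}) key key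
    (fun S _ => by simp) (fun S _ => by simp) (fun S _ => rfl)

lemma sg_flip_self (S : Finset α) (v : α) : sg (symmDiff S {v}) v = - sg S v := by
  unfold sg
  by_cases h : v ∈ S <;> simp [mem_symmDiff, h]

lemma sg_flip_ne (S : Finset α) {v w : α} (h : w ≠ v) : sg (symmDiff S {v}) w = sg S w := by
  unfold sg
  by_cases h' : w ∈ S <;> simp [mem_symmDiff, h', h]

/-- Minkowski, even simple form -/
lemma EE_minkowski {V : Finset α} {p : ℕ} (hp : 0 < p) {f g : Finset α → ℝ} {A B : ℝ}
    (hA : 0 ≤ A) (hB : 0 ≤ B) (hf0 : ∀ S, 0 ≤ f S) (hg0 : ∀ S, 0 ≤ g S)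
    (hf : EE V (fun S => f S ^ p) ≤ A ^ p) (hg : EE V (fun S => g S ^ p) ≤ B ^ p) :
    EE V (fun S => (f S + g S) ^ p) ≤ (A + B) ^ p := by
  have hp1 : (1 : ℝ) ≤ p := by exact_mod_cast hp
  have h := Real.Lp_add_le_of_nonneg V.powerset (f := f) (g := g) hp1 (fun i _ => hf0 i)
    (fun i _ => hg0 i)
  simp only [Real.rpow_natCast] at h
  set n : ℝ := 2 ^ V.card with hn
  have hn0 : 0 < n := by positivity
  unfold EE at *
  rw [← hn] at *
  have e : ∀ x : ℝ, 0 ≤ x → ∀ y : ℝ, 0 ≤ y → y / n ≤ x ^ p → y ^ (1 / (p:ℝ)) ≤ n ^ (1/(p:ℝ)) * x := by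
    intro x hx y hy hxy
    rw [div_le_iff₀ hn0] at hxy
    calc y ^ (1 / (p:ℝ)) ≤ (n * x ^ p) ^ (1/(p:ℝ)) := by
          apply Real.rpow_le_rpow hy _ (by positivity)
          linarith
      _ = _ := by
          rw [Real.mul_rpow hn0.le (by positivity), one_div, Real.pow_rpow_inv_natCast hx (by omega)]
  have h1 := e A hA _ (sum_nonneg fun i _ => pow_nonneg (hf0 i) p) hf
  have h2 := e B hB _ (sum_nonneg fun i _ => pow_nonneg (hg0 i) p) hg
  have h3 : (∑ i ∈ V.powerset, (f i + g i) ^ p) ^ (1 / (p:ℝ)) ≤ n ^ (1/(p:ℝ)) * (A + B) := by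
    linarith
  have h0 : 0 ≤ ∑ i ∈ V.powerset, (f i + g i) ^ p :=
    sum_nonneg fun i _ => pow_nonneg (add_nonneg (hf0 i) (hg0 i)) p
  have h4 := pow_le_pow_left₀ (by positivity) h3 p
  rw [one_div, Real.rpow_inv_natCast_pow h0 (by omega), mul_pow,
    Real.rpow_inv_natCast_pow hn0.le (by omega)] at h4
  rw [div_le_iff₀ hn0]
  linarith

lemma two_pt_aux (x y : ℝ) (j : ℕ) :
    (x^2 - y^2) * ((x^2)^j - (y^2)^j) ≤ 2 * j * (x - y)^2 * ((x^2)^j + (y^2)^j) := by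
  induction j with
  | zero => simp
  | succ j ih =>
    set D := (x^2)^j - (y^2)^j with hD
    set T := (x^2)^j + (y^2)^j with hT
    have hT0 : 0 ≤ T := by positivity
    have e1 : (x^2)^(j+1) - (y^2)^(j+1) = ((x^2+y^2) * D + (x^2-y^2) * T)/2 := by
      rw [hD, hT]; ring
    have e2 : (x^2)^(j+1) + (y^2)^(j+1) = ((x^2+y^2) * T + (x^2-y^2) * D)/2 := by
      rw [hD, hT]; ring
    rw [e1, e2]
    have hm : 0 ≤ (x^2-y^2) * D := by
      rcases le_total (x^2) (y^2) with h | h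
      · have := pow_le_pow_left₀ (sq_nonneg x) h j
        exact mul_nonneg_of_nonpos_of_nonpos (by linarith) (by linarith)
      · have := pow_le_pow_left₀ (sq_nonneg y) h j
        exact mul_nonneg (by linarith) (by linarith)
    have f1 : (x^2+y^2) * ((x^2-y^2) * D) ≤ (x^2+y^2) * (2 * j * (x - y)^2 * T) := by
      gcongr
    have f2 : (x^2-y^2)^2 * T ≤ 2 * (x^2+y^2) * (x-y)^2 * T := by
      gcongr
      have : (x^2-y^2)^2 = (x+y)^2 * (x-y)^2 := by ring
      rw [this]
      gcongr
      nlinarith [sq_nonneg (x-y)]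
    have f3 : 0 ≤ 2 * (j+1 : ℝ) * (x - y)^2 * ((x^2-y^2) * D) := by positivity
    push_cast
    nlinarith

lemma two_pt (h g : ℝ) (p j : ℕ) (hj : j ≤ p) :
    ((h + g)^(2*j) + (h - g)^(2*j))/2 ≤ (h^2 + 4 * p * g^2)^j := by
  induction j with
  | zero => simp
  | succ j ih =>
    have ih := ih (by omega)
    have aux := two_pt_aux (h+g) (h-g) j
    have hjp : (j:ℝ) + 1 ≤ p := by exact_mod_cast hj
    simp only [pow_mul] at *
    set T := ((h+g)^2)^j + ((h-g)^2)^j with hT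
    have hT0 : 0 ≤ T := by positivity
    have e : (((h+g)^2)^(j+1) + ((h-g)^2)^(j+1))/2 =
       ((h^2+g^2) * T)/2 + (((h+g)^2 - (h-g)^2) * (((h+g)^2)^j - ((h-g)^2)^j))/4 := by
      rw [hT]; ring
    rw [e]
    have : (h^2+g^2) * T/2 + (((h+g)^2 - (h-g)^2) * (((h+g)^2)^j - ((h-g)^2)^j))/4 ≤
       (h^2 + 4 * p * g^2) * (T/2) := by
      have : 0 ≤ g^2 * T * ((p:ℝ) - (j+1)) := by
        apply mul_nonneg (by positivity); linarith
      have : 0 ≤ g^2 * T := by positivity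
      nlinarith
    refine this.trans ?_
    rw [pow_succ' (h^2 + 4 * (p:ℝ) * g^2) j]
    exact mul_le_mul_of_nonneg_left ih (by positivity)

/-- slicing step -/
lemma EE_slice {V : Finset α} {v : α} (hv : v ∉ V) {p : ℕ} (hp : 0 < p)
    {F f g : Finset α → ℝ} {A B : ℝ} (hA : 0 ≤ A) (hB : 0 ≤ B)
    (h1 : ∀ S ⊆ V, F S = f S + g S) (h2 : ∀ S ⊆ V, F (insert v S) = f S - g S)
    (hf : EE V (fun S => f S ^ (2*p)) ≤ A ^ p) (hg : EE V (fun S => g S ^ (2*p)) ≤ B ^ p) :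
    EE (insert v V) (fun S => F S ^ (2*p)) ≤ (A + 4 * p * B) ^ p := by
  rw [EE_insert hv]
  calc _ ≤ EE V (fun S => (f S ^2 + 4 * p * g S ^2)^p) := by
        refine EE_mono fun S hS => ?_
        simp only [h1 S hS, h2 S hS]
        exact two_pt _ _ p p le_rfl
    _ ≤ _ := by
        apply EE_minkowski hp hA (by positivity) (fun S => by positivity) (fun S => by positivity)
        · simpa only [pow_mul] using hf
        · simp only [mul_pow (4 * (p:ℝ))]
          rw [EE_mul]
          simp only [pow_mul] at hg
          gcongr

end helpers

section helpers
set_option linter.unusedSectionVars false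
variable {α : Type*} [DecidableEq α]

lemma sg_insert_self (S : Finset α) (v : α) : sg (insert v S) v = -1 := by simp [sg]
lemma sg_insert_ne (S : Finset α) {v w : α} (h : w ≠ v) : sg (insert v S) w = sg S w := by
  simp [sg, h]

/-- families for slicing -/
def Q0 (Q : Finset (Finset α)) (v : α) : Finset (Finset α) := Q.filter (fun e => v ∉ e)
def Q1 (Q : Finset (Finset α)) (v : α) : Finset (Finset α) :=
  (Q.filter (fun e => v ∈ e)).image (fun e => e.erase v)

lemma Q1_inj (Q : Finset (Finset α)) (v : α) :
    Set.InjOn (fun e : Finset α => e.erase v) (Q.filter (fun e => v ∈ e) : Finset (Finset α)) := by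
  intro e he e' he' h
  simp only [coe_filter, Set.mem_ofPred_eq] at he he'
  have : insert v (e.erase v) = insert v (e'.erase v) := by
    simp only at h; rw [h]
  rwa [insert_erase he.2, insert_erase he'.2] at this

lemma mem_Q1 {Q : Finset (Finset α)} {v : α} {e : Finset α} (h : e ∈ Q1 Q v) :
    v ∉ e ∧ insert v e ∈ Q := by
  unfold Q1 at h
  simp only [mem_image, mem_filter] at h
  obtain ⟨e', ⟨h1, h2⟩, rfl⟩ := h
  exact ⟨by simp, by rwa [insert_erase h2]⟩

lemma Q_card (Q : Finset (Finset α)) (v : α) : (Q0 Q v).card + (Q1 Q v).card = Q.card := by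
  unfold Q0 Q1
  rw [card_image_of_injOn (Q1_inj Q v), add_comm]
  exact card_filter_add_card_filter_not _

lemma FF_split (Q : Finset (Finset α)) (v : α) (S : Finset α) :
    FF Q S = FF (Q0 Q v) S + sg S v * FF (Q1 Q v) S := by
  unfold FF
  rw [← sum_filter_not_add_sum_filter Q (fun e => v ∈ e)]
  congr 1
  rw [Q1, sum_image (Q1_inj Q v), mul_sum]
  refine sum_congr rfl fun e he => ?_
  rw [mem_filter] at he
  exact (mul_prod_erase e (sg S) he.2).symm

lemma FF_insert_indep (Q : Finset (Finset α)) (v : α) (h : ∀ e ∈ Q, v ∉ e) (S : Finset α) :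
    FF Q (insert v S) = FF Q S := by
  unfold FF
  refine sum_congr rfl fun e he => prod_congr rfl fun w hw => sg_insert_ne S ?_
  rintro rfl
  exact h e he hw

lemma chain {p : ℕ} (hp : 0 < p) {θ γ : ℝ} (hθ : 0 ≤ θ) (hγ : 0 ≤ γ) (k : ℕ) :
    ∀ (V : Finset α) (Q : Finset (Finset α)), (∀ e ∈ Q, e ⊆ V ∧ e.card = k + 2) →
    (∀ (T W : Finset α) (G : Finset (Finset α)), T ⊆ V → W ⊆ V → Disjoint T W → T.card = k →
      (∀ e ∈ G, e ⊆ W ∧ e.card = 2 ∧ T ∪ e ∈ Q) →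
      EE W (fun S => FF G S ^ (2*p)) ≤ (θ * G.card + γ) ^ p) →
    EE V (fun S => FF Q S ^ (2*p)) ≤ ((4*p)^k * (θ * Q.card + γ * (V.card:ℝ)^k)) ^ p := by
  induction k with
  | zero =>
    intro V Q hQ hG
    have := hG ∅ V Q (by simp) (by simp) (by simp) (by simp) (fun e he => by
      simpa using ⟨(hQ e he).1, (hQ e he).2, he⟩)
    simpa using this
  | succ k ihk =>
    intro V
    induction V using Finset.induction_on with
    | empty =>
      intro Q hQ _
      have : Q = ∅ := by
        by_contra hne
        obtain ⟨e, he⟩ := nonempty_iff_ne_empty.2 hne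
        have := hQ e he
        rw [subset_empty] at this
        rw [this.1] at this
        simp at this
      subst this
      have : (fun S : Finset α => FF (∅ : Finset (Finset α)) S ^ (2*p)) = fun _ => 0 := by
        funext S; simp [FF]; omega
      rw [this, EE_const]; positivity
    | insert v V hv ihV =>
      intro Q hQ hG
      have hA := ihV (Q0 Q v) (fun e he => by
        rw [Q0, mem_filter] at he
        have := hQ e he.1
        exact ⟨(subset_insert_iff_of_notMem he.2).1 this.1, this.2⟩)
        (fun T W G hT hW hTW hTk hGe => hG T W G (hT.trans (subset_insert _ _))
          (hW.trans (subset_insert _ _)) hTW hTk (fun e he => by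
            obtain ⟨a, b, c⟩ := hGe e he
            rw [Q0, mem_filter] at c
            exact ⟨a, b, c.1⟩))
      have hB := ihk V (Q1 Q v) (fun e he => by
        obtain ⟨h1, h2⟩ := mem_Q1 he
        have := hQ _ h2
        rw [card_insert_of_notMem h1] at this
        refine ⟨?_, by omega⟩
        have h3 := (subset_insert v e).trans this.1
        exact (subset_insert_iff_of_notMem h1).1 h3)
        (fun T W G hT hW hTW hTk hGe => hG (insert v T) W G (insert_subset_insert v hT)
          (hW.trans (subset_insert _ _)) (by
            rw [disjoint_insert_left]; exact ⟨fun h => hv (hW h), hTW⟩)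
            (by rw [card_insert_of_notMem (fun h => hv (hT h)), hTk]) (fun e he => by
            obtain ⟨a, b, c⟩ := hGe e he
            refine ⟨a, b, ?_⟩
            rw [insert_union]
            exact (mem_Q1 c).2))
      have hs := EE_slice (F := FF Q) (f := FF (Q0 Q v)) (g := FF (Q1 Q v)) hv hp
        (by positivity) (by positivity)
        (fun S hS => by
          rw [FF_split Q v, show sg S v = 1 from if_neg (fun h => hv (hS h))]; ring)
        (fun S hS => by
          rw [FF_split Q v, sg_insert_self, FF_insert_indep, FF_insert_indep]; ring
          · exact fun e he => (mem_Q1 he).1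
          · intro e he
            rw [Q0, mem_filter] at he
            exact he.2) hA hB
      refine hs.trans ?_
      gcongr
      have hc : (Q.card : ℝ) = (Q0 Q v).card + (Q1 Q v).card := by
        rw [← Q_card Q v]; push_cast; ring
      rw [hc, card_insert_of_notMem hv]
      push_cast
      have hpow : (V.card : ℝ)^(k+1) + (V.card:ℝ)^k ≤ ((V.card:ℝ)+1)^(k+1) := by
        rw [pow_succ ((V.card:ℝ)+1), pow_succ]
        have : (V.card:ℝ)^k ≤ ((V.card:ℝ)+1)^k := by gcongr; linarith
        nlinarith [(Nat.cast_nonneg V.card : (0:ℝ) ≤ V.card)]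
      have h5 : (0:ℝ) ≤ (4*p)^(k+1) * γ := by positivity
      have h6 := mul_le_mul_of_nonneg_left hpow h5
      rw [pow_succ (4 * (p:ℝ))] at *
      nlinarith

/-- Khinchine -/
lemma khinchine {p : ℕ} (hp : 0 < p) (U : Finset α) (a : α → ℝ) :
    EE U (fun S => (∑ u ∈ U, sg S u * a u) ^ (2*p)) ≤ (4 * p * ∑ u ∈ U, a u ^2) ^ p := by
  induction U using Finset.induction_on with
  | empty =>
    simp only [sum_empty]
    rw [EE_const, zero_pow (by omega)]; positivity
  | insert v U hv ih =>
    have hg : EE U (fun _ => a v ^ (2*p)) ≤ (a v ^ 2)^p := by rw [EE_const, pow_mul]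
    have := EE_slice (F := fun S => ∑ u ∈ insert v U, sg S u * a u)
      (f := fun S => ∑ u ∈ U, sg S u * a u) (g := fun _ => a v) hv hp
        (by positivity) (by positivity)
        (fun S hS => by
          rw [sum_insert hv, show sg S v = 1 from if_neg (fun h => hv (hS h))]; ring)
        (fun S hS => by
          rw [sum_insert hv, sg_insert_self]
          have : ∑ u ∈ U, sg (insert v S) u * a u = ∑ u ∈ U, sg S u * a u := by
            refine sum_congr rfl fun u hu => ?_
            rw [sg_insert_ne]
            rintro rfl; exact hv hu
          rw [this]; ring) ih hg
    refine this.trans (le_of_eq ?_)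
    rw [sum_insert hv]
    ring

lemma pow_trap (x y : ℝ) (hx : 0 ≤ x) (hy : 0 ≤ y) (k : ℕ) :
    |x^k - y^k| ≤ |x-y| * k * (x^(k-1) + y^(k-1)) := by
  refine (abs_pow_sub_pow_le x y k).trans ?_
  gcongr
  rw [abs_of_nonneg hx, abs_of_nonneg hy]
  rcases le_total x y with h | h
  · rw [max_eq_right h]; have := pow_nonneg hx (k-1); linarith
  · rw [max_eq_left h]; have := pow_nonneg hy (k-1); linarith

/-- the linear forms -/
def lf (A : α → α → ℝ) (W : Finset α) (S : Finset α) (u : α) : ℝ := ∑ w ∈ W, A u w * sg S w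
def ZZ (A : α → α → ℝ) (U W : Finset α) (S : Finset α) : ℝ := ∑ u ∈ U, lf A W S u ^ 2

lemma lf_flip (A : α → α → ℝ) {W : Finset α} {w : α} (hw : w ∈ W) (S : Finset α) (u : α) :
    lf A W (symmDiff S {w}) u = lf A W S u - 2 * sg S w * A u w := by
  unfold lf
  rw [← add_sum_erase W _ hw, ← add_sum_erase W (fun w => A u w * sg S w) hw, sg_flip_self]
  have : ∑ x ∈ W.erase w, A u x * sg (symmDiff S {w}) x = ∑ x ∈ W.erase w, A u x * sg S x := by
    refine sum_congr rfl fun x hx => ?_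
    rw [sg_flip_ne S (ne_of_mem_erase hx)]
  rw [this]; ring

lemma ZZ_nonneg (A : α → α → ℝ) (U W S : Finset α) : 0 ≤ ZZ A U W S :=
  sum_nonneg fun _ _ => sq_nonneg _

lemma ZZ_term (A : α → α → ℝ) (U W : Finset α) {w : α} (hw : w ∈ W) (k : ℕ) :
    EE W (fun S => sg S w * (∑ u ∈ U, A u w * lf A W S u) * ZZ A U W S ^ k) ≤
    (∑ u ∈ U, A u w ^ 2) * EE W (fun S => ZZ A U W S ^ k) +
    8 * k * EE W (fun S => ((∑ u ∈ U, A u w * lf A W S u)^2 + (∑ u ∈ U, A u w ^ 2)^2)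
      * ZZ A U W S ^ (k-1)) := by
  set β := ∑ u ∈ U, A u w ^ 2 with hβ
  set f := fun S => sg S w * (∑ u ∈ U, A u w * lf A W S u) * ZZ A U W S ^ k with hf
  set g := fun S => β * ZZ A U W S ^ k + 8 * k * (((∑ u ∈ U, A u w * lf A W S u)^2 + β^2)
      * ZZ A U W S ^ (k-1)) with hg
  have hgE : EE W g = β * EE W (fun S => ZZ A U W S ^ k) +
    8 * k * EE W (fun S => ((∑ u ∈ U, A u w * lf A W S u)^2 + β^2)
      * ZZ A U W S ^ (k-1)) := by
    rw [hg, EE_add, EE_mul, EE_mul]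
  rw [← hgE]
  have hsum : EE W (fun S => f S + f (symmDiff S {w})) ≤ EE W (fun S => g S + g (symmDiff S {w})) := by
    refine EE_mono fun S hS => ?_
    simp only [hf, hg]
    rw [sg_flip_self]
    have hb : ∑ u ∈ U, A u w * lf A W (symmDiff S {w}) u =
        ∑ u ∈ U, A u w * lf A W S u - 2 * sg S w * β := by
      simp only [lf_flip A hw]
      rw [hβ, mul_sum, ← sum_sub_distrib]
      exact sum_congr rfl fun u _ => by ring
    have hZ : ZZ A U W (symmDiff S {w}) =
        ZZ A U W S - 4 * sg S w * (∑ u ∈ U, A u w * lf A W S u) + 4 * β := by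
      unfold ZZ
      simp only [lf_flip A hw]
      rw [hβ, mul_sum, mul_sum, ← sum_sub_distrib, ← sum_add_distrib]
      exact sum_congr rfl fun u _ => by
        have := sg_sq S w
        linear_combination (4 * A u w ^ 2) * this
    have hZ0 := ZZ_nonneg A U W S
    have hZ0' := ZZ_nonneg A U W (symmDiff S {w})
    set Z := ZZ A U W S
    set Z' := ZZ A U W (symmDiff S {w})
    set q := ∑ u ∈ U, A u w * lf A W S u
    rw [hb]
    set ε := sg S w
    have hε : ε * ε = 1 := sg_sq S w
    have ht := pow_trap Z Z' hZ0 hZ0' k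
    set r := ε * q - β with hr
    have hZZ : Z - Z' = 4 * r := by rw [hZ, hr]; ring
    rw [hZZ, abs_mul, abs_of_pos (by norm_num : (0:ℝ) < 4)] at ht
    have h1 : r * (Z^k - Z'^k) ≤ 4 * r^2 * k * (Z^(k-1) + Z'^(k-1)) := by
      calc r * (Z^k - Z'^k) ≤ |r * (Z^k - Z'^k)| := le_abs_self _
        _ = |r| * |Z^k - Z'^k| := abs_mul _ _
        _ ≤ |r| * (4 * |r| * k * (Z^(k-1) + Z'^(k-1))) := by gcongr
        _ = 4 * |r|^2 * k * (Z^(k-1) + Z'^(k-1)) := by ring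
        _ = _ := by rw [sq_abs]
    have hq2 : (ε * q)^2 = q^2 := by
      have : (ε*q)^2 = (ε*ε) * q^2 := by ring
      rw [this, hε, one_mul]
    have hr1 : r^2 ≤ 2 * (q^2 + β^2) := by
      rw [← hq2, hr]; nlinarith [sq_nonneg (ε*q + β)]
    have hr2 : r^2 ≤ 2 * ((q - 2*ε*β)^2 + β^2) := by
      have : (q - 2*ε*β)^2 = (ε * q - 2 * β)^2 := by
        linear_combination (4 * β^2 - q^2) * hε
      rw [this, hr]; nlinarith [sq_nonneg (ε*q - 2 * β - β)]
    have hz1 : 0 ≤ (k:ℝ) * Z^(k-1) := by positivity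
    have hz2 : 0 ≤ (k:ℝ) * Z'^(k-1) := by positivity
    have e1 : ε * q * Z^k + -ε * (q - 2*ε*β) * Z'^k =
       β * (Z^k + Z'^k) + r * (Z^k - Z'^k) := by
      rw [hr]; linear_combination (2 * β * Z'^k) * hε
    rw [e1]
    have m1 := mul_le_mul_of_nonneg_left hr1 hz1
    have m2 := mul_le_mul_of_nonneg_left hr2 hz2
    nlinarith
  rw [EE_add, EE_add, EE_flip hw f, EE_flip hw g] at hsum
  linarith

lemma ZZ_rec (A : α → α → ℝ) (U W : Finset α) {a : ℝ} (ha : 0 ≤ a)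
    (hop : ∀ x : α → ℝ, ∑ w ∈ W, (∑ u ∈ U, A u w * x u)^2 ≤ a * ∑ u ∈ U, x u ^ 2) (k : ℕ) :
    EE W (fun S => ZZ A U W S ^ (k+1)) ≤
      (∑ w ∈ W, ∑ u ∈ U, A u w ^ 2) * EE W (fun S => ZZ A U W S ^ k) +
      8 * k * (a * EE W (fun S => ZZ A U W S * ZZ A U W S ^ (k-1)) +
       a * (∑ w ∈ W, ∑ u ∈ U, A u w ^ 2) * EE W (fun S => ZZ A U W S ^ (k-1))) := by
  have hβ : ∀ w ∈ W, (∑ u ∈ U, A u w ^ 2) ≤ a := by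
    intro w hw
    have h := hop (fun u => A u w)
    have h2 := single_le_sum (f := fun w' => (∑ u ∈ U, A u w' * A u w)^2)
      (fun i _ => sq_nonneg _) hw
    simp only [← sq] at h2
    have h3 := h2.trans h
    by_contra hlt
    push Not at hlt
    have : 0 < ∑ u ∈ U, A u w ^ 2 := ha.trans_lt hlt
    nlinarith
  have e : ∀ S, ZZ A U W S ^ (k+1) =
      ∑ w ∈ W, sg S w * (∑ u ∈ U, A u w * lf A W S u) * ZZ A U W S ^ k := by
    intro S
    rw [← sum_mul, pow_succ', ]
    congr 1
    simp only [mul_sum]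
    rw [sum_comm]
    unfold ZZ
    refine sum_congr rfl fun u _ => ?_
    rw [sq]; nth_rewrite 1 [lf]
    rw [sum_mul]
    exact sum_congr rfl fun w _ => by ring
  simp only [e]
  rw [EE_sum]
  refine (sum_le_sum fun w hw => ZZ_term A U W hw k).trans ?_
  rw [sum_add_distrib, ← sum_mul, ← mul_sum, ← EE_sum]
  gcongr
  rw [← EE_mul, ← EE_mul, ← EE_add]
  refine EE_mono fun S _ => ?_
  rw [← sum_mul, sum_add_distrib, ← mul_assoc, ← add_mul]
  have := ZZ_nonneg A U W S
  gcongr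
  · exact hop _
  · rw [mul_sum]
    refine sum_le_sum fun w hw => ?_
    rw [sq]
    exact mul_le_mul_of_nonneg_right (hβ w hw) (sum_nonneg fun _ _ => sq_nonneg _)

lemma ZZ_mom (A : α → α → ℝ) (U W : Finset α) {a : ℝ} (ha : 0 ≤ a) (p : ℕ)
    (hop : ∀ x : α → ℝ, ∑ w ∈ W, (∑ u ∈ U, A u w * x u)^2 ≤ a * ∑ u ∈ U, x u ^ 2) (k : ℕ)
    (hk : k ≤ p) :
    EE W (fun S => ZZ A U W S ^ k) ≤ ((∑ w ∈ W, ∑ u ∈ U, A u w ^ 2) + 16 * p * a)^k := by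
  have hT : 0 ≤ ∑ w ∈ W, ∑ u ∈ U, A u w ^ 2 := sum_nonneg fun _ _ => sum_nonneg fun _ _ => sq_nonneg _
  induction k using Nat.strong_induction_on with
  | _ k ih =>
    rcases k with _ | k
    · simp [EE_const]
    · refine (ZZ_rec A U W ha hop k).trans ?_
      have h1 := ih k (by omega) (by omega)
      set T := ∑ w ∈ W, ∑ u ∈ U, A u w ^ 2
      set R := T + 16 * p * a with hR
      have hR0 : 0 ≤ R := by positivity
      have hTR : T ≤ R := by rw [hR]; have : 0 ≤ 16 * p * a := by positivity
                             linarith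
      have hkp : (k:ℝ) ≤ p := by exact_mod_cast (by omega : k ≤ p)
      rcases k with _ | k
      · simp only [zero_add, pow_zero, EE_const]; simp; exact hTR
      · have h2 := ih k (by omega) (by omega)
        simp only [Nat.add_sub_cancel, ← pow_succ']
        calc _ ≤ T * R^(k+1) + 8 * (k+1:ℕ) * (a * R^(k+1) + a * T * R^k) := by gcongr
          _ ≤ T * R^(k+1) + 8 * p * (a * R^(k+1) + a * R * R^k) := by gcongr
          _ = R^(k+1+1) := by rw [hR]; ring
end helpers

section helpers
set_option linter.unusedSectionVars false
variable {α : Type*} [DecidableEq α]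

lemma op_core (A : α → α → ℝ) (hA : ∀ u w, A u w = 0 ∨ A u w = 1) (U W : Finset α)
    (N ρ a Γ : ℝ) (s t : ℕ) (hN : 0 < N) (hU : (U.card : ℝ) ≤ N) (hW : (W.card : ℝ) ≤ N)
    (hρ : 0 < ρ) (ha0 : 0 < a) (ha : 4 * ρ * (∑ w ∈ W, ∑ u ∈ U, A u w) ≤ a) (haN : N * Γ ≤ a)
    (hΓ1 : 4 * s ≤ ρ * Γ) (hΓ2 : (t:ℝ) ≤ (ρ/8) * (ρ/4)^s * Γ)
    (x : α → ℝ) (hx1 : ∑ u ∈ U, x u ^2 ≤ 1)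
    (hV : a < ∑ w ∈ W, (∑ u ∈ U, A u w * x u)^2) :
    ∃ L ⊆ W, ∃ L' ⊆ U, L.card = s ∧ t ≤ L'.card ∧ ∀ w ∈ L, ∀ u ∈ L', A u w = 1 := by
  have hA0 : ∀ u w, 0 ≤ A u w := fun u w => by rcases hA u w with h | h <;> rw [h]; norm_num
  have hA1 : ∀ u w, A u w ≤ 1 := fun u w => by rcases hA u w with h | h <;> rw [h]; norm_num
  have hA2 : ∀ u w, A u w ^2 = A u w := fun u w => by rcases hA u w with h | h <;> rw [h] <;> norm_num
  set deg : α → ℝ := fun w => ∑ u ∈ U, A u w with hdeg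
  set E := ∑ w ∈ W, ∑ u ∈ U, A u w with hE
  have hdeg0 : ∀ w, 0 ≤ deg w := fun w => sum_nonneg fun u _ => hA0 u w
  have hdegN : ∀ w, deg w ≤ N := fun w => by
    refine le_trans ?_ hU
    calc deg w ≤ ∑ u ∈ U, (1:ℝ) := sum_le_sum fun u _ => hA1 u w
      _ = _ := by simp
  have haE : a < E := by
    refine hV.trans_le (sum_le_sum fun w _ => ?_)
    have h := sum_mul_sq_le_sq_mul_sq U (fun u => A u w) x
    simp only [hA2] at h
    refine h.trans ?_
    have := mul_le_mul_of_nonneg_left hx1 (hdeg0 w)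
    simpa [hdeg] using this
  have hE0 : 0 < E := ha0.trans haE
  set β := 4 * N / a with hβ
  have hβ0 : 0 < β := by positivity
  set Sm := U.filter (fun u => x u ^ 2 ≤ β) with hSm
  set Bg := U.filter (fun u => ¬ x u ^ 2 ≤ β) with hBg
  have hsq : ∀ B ⊆ U, ∑ u ∈ B, x u ^ 2 ≤ 1 := fun B hB =>
    (sum_le_sum_of_subset_of_nonneg hB fun _ _ _ => sq_nonneg _).trans hx1
  have hBgc : (Bg.card : ℝ) * β ≤ 1 := by
    refine le_trans ?_ (hsq Bg (filter_subset _ _))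
    have := card_nsmul_le_sum Bg (fun u => x u ^2) β (fun u hu => by
      rw [hBg, mem_filter] at hu; exact (not_le.1 hu.2).le)
    simpa using this
  have hyb : ∑ w ∈ W, (∑ u ∈ Bg, A u w * x u)^2 ≤ a / 4 := by
    calc _ ≤ ∑ w ∈ W, (Bg.card : ℝ) := by
          refine sum_le_sum fun w _ => ?_
          refine (sum_mul_sq_le_sq_mul_sq Bg (fun u => A u w) x).trans ?_
          have h1 : ∑ u ∈ Bg, A u w ^ 2 ≤ Bg.card := by
            calc _ ≤ ∑ u ∈ Bg, (1:ℝ) := sum_le_sum fun u _ => by rw [hA2]; exact hA1 u w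
              _ = _ := by simp
          have h2 := hsq Bg (filter_subset _ _)
          calc _ ≤ (Bg.card : ℝ) * 1 := by gcongr
            _ = _ := mul_one _
      _ = W.card * (Bg.card : ℝ) := by simp
      _ ≤ N * Bg.card := by gcongr
      _ ≤ N * (1 / β) := by
          gcongr; rwa [le_div_iff₀ hβ0]
      _ = a / 4 := by rw [hβ]; field_simp
  have hys : a / 4 < ∑ w ∈ W, (∑ u ∈ Sm, A u w * x u)^2 := by
    have : ∑ w ∈ W, (∑ u ∈ U, A u w * x u)^2 ≤
        ∑ w ∈ W, (2 * (∑ u ∈ Bg, A u w * x u)^2 + 2 * (∑ u ∈ Sm, A u w * x u)^2) := by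
      refine sum_le_sum fun w _ => ?_
      rw [← sum_filter_add_sum_filter_not U (fun u => x u ^ 2 ≤ β)]
      nlinarith [sq_nonneg (∑ u ∈ Bg, A u w * x u - ∑ u ∈ Sm, A u w * x u)]
    rw [sum_add_distrib, ← mul_sum, ← mul_sum] at this
    linarith
  set P : α → ℝ := fun u => ∑ w ∈ W, A u w * deg w with hP
  have hPE : ∀ u, P u ≤ E := fun u => sum_le_sum fun w _ => by
    have := mul_le_mul_of_nonneg_right (hA1 u w) (hdeg0 w)
    simpa [hdeg] using this
  have hdens : ρ * E < ∑ u ∈ Sm, x u ^2 * P u := by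
    calc ρ * E ≤ a / 4 := by linarith
      _ < _ := hys
      _ ≤ ∑ w ∈ W, deg w * ∑ u ∈ Sm, A u w * x u ^2 := by
          refine sum_le_sum fun w _ => ?_
          have h := sum_mul_sq_le_sq_mul_sq Sm (fun u => A u w) (fun u => A u w * x u)
          simp only [← mul_assoc, ← sq, mul_pow, hA2] at h
          refine h.trans ?_
          gcongr
          · exact sum_nonneg fun u _ => mul_nonneg (hA0 _ _) (sq_nonneg _)
          · exact sum_le_sum_of_subset_of_nonneg (filter_subset _ _) fun _ _ _ => hA0 _ _
      _ = _ := by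
          simp only [hP, mul_sum]
          rw [sum_comm]
          exact sum_congr rfl fun u _ => sum_congr rfl fun w _ => by ring
  set W0 := Sm.filter (fun u => ρ * E / 2 ≤ P u) with hW0
  have hW0m : ρ / 2 < ∑ u ∈ W0, x u ^2 := by
    rw [← sum_filter_add_sum_filter_not Sm (fun u => ρ * E / 2 ≤ P u)] at hdens
    have h1 : ∑ u ∈ W0, x u ^2 * P u ≤ (∑ u ∈ W0, x u ^2) * E := by
      rw [sum_mul]
      exact sum_le_sum fun u _ => mul_le_mul_of_nonneg_left (hPE u) (sq_nonneg _)
    have h2 : ∑ u ∈ Sm.filter (fun u => ¬ ρ * E / 2 ≤ P u), x u ^2 * P u ≤ 1 * (ρ * E / 2) := by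
      calc _ ≤ ∑ u ∈ Sm.filter (fun u => ¬ ρ * E / 2 ≤ P u), x u ^2 * (ρ * E / 2) := by
            refine sum_le_sum fun u hu => ?_
            rw [mem_filter] at hu
            exact mul_le_mul_of_nonneg_left (not_le.1 hu.2).le (sq_nonneg _)
        _ ≤ _ := by
            rw [← sum_mul]
            gcongr
            exact hsq _ ((filter_subset _ _).trans (filter_subset _ _))
    have h3 : ρ / 2 * E < (∑ u ∈ W0, x u ^2) * E := by
      have : ∑ u ∈ Sm with ρ * E / 2 ≤ P u, x u ^ 2 * P u = ∑ u ∈ W0, x u ^2 * P u := rfl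
      linarith
    exact lt_of_mul_lt_mul_right h3 hE0.le
  have greedy : ∀ j ≤ s, ∃ L ⊆ W, ∃ L' ⊆ W0, L.card = j ∧ (∀ w ∈ L, ∀ u ∈ L', A u w = 1) ∧
      (ρ/2) * (ρ/4)^j ≤ ∑ u ∈ L', x u ^2 := by
    intro j
    induction j with
    | zero =>
      intro _
      exact ⟨∅, by simp, W0, Subset.rfl, by simp, by simp, by simpa using hW0m.le⟩
    | succ j ih =>
      intro hj
      obtain ⟨L, hL, L', hL', hc, hadj, hm⟩ := ih (by omega)
      have hm0 : 0 < ∑ u ∈ L', x u ^2 := lt_of_lt_of_le (by positivity) hm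
      set m := ∑ u ∈ L', x u ^2 with hmdef
      have key : ∃ w ∈ W \ L, ρ / 4 * m ≤ ∑ u ∈ L' with A u w = 1, x u ^2 := by
        by_contra hcon
        push Not at hcon
        have hfil : ∀ w, ∑ u ∈ L' with A u w = 1, x u ^2 = ∑ u ∈ L', A u w * x u ^2 := by
          intro w
          rw [sum_filter]
          refine sum_congr rfl fun u _ => ?_
          rcases hA u w with h | h <;> rw [h] <;> simp
        have up : ∑ w ∈ W \ L, deg w * ∑ u ∈ L', A u w * x u ^2 ≤ ρ/4 * m * E := by
          calc _ ≤ ∑ w ∈ W \ L, deg w * (ρ/4 * m) := by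
                refine sum_le_sum fun w hw => ?_
                rw [← hfil]
                exact mul_le_mul_of_nonneg_left (hcon w hw).le (hdeg0 w)
            _ = (∑ w ∈ W \ L, deg w) * (ρ/4*m) := by rw [sum_mul]
            _ ≤ E * (ρ/4*m) := by
                gcongr
                exact sum_le_sum_of_subset_of_nonneg sdiff_subset fun _ _ _ => hdeg0 _
            _ = _ := by ring
        have low : m * (ρ * E/2 - j * N) ≤ ∑ w ∈ W \ L, deg w * ∑ u ∈ L', A u w * x u ^2 := by
          calc _ ≤ ∑ u ∈ L', x u ^2 * ∑ w ∈ W \ L, A u w * deg w := by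
                rw [hmdef, sum_mul]
                refine sum_le_sum fun u hu => mul_le_mul_of_nonneg_left ?_ (sq_nonneg _)
                have hu0 := hL' hu
                rw [hW0, mem_filter] at hu0
                have hPu : P u = ∑ w ∈ W \ L, A u w * deg w + ∑ w ∈ L, A u w * deg w :=
                  (sum_sdiff hL).symm
                have : ∑ w ∈ L, A u w * deg w ≤ j * N := by
                  calc _ ≤ ∑ w ∈ L, N := by
                        refine sum_le_sum fun w _ => ?_
                        calc _ ≤ 1 * deg w := mul_le_mul_of_nonneg_right (hA1 _ _) (hdeg0 w)
                          _ ≤ N := by rw [one_mul]; exact hdegN w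
                    _ = _ := by simp [hc]
                linarith [hu0.2]
            _ = _ := by
              simp only [mul_sum]
              rw [sum_comm]
              exact sum_congr rfl fun u _ => sum_congr rfl fun w _ => by ring
        have hjN : (j:ℝ) * N < ρ * E / 4 := by
          have h1 : (j:ℝ) ≤ s := by exact_mod_cast (by omega : j ≤ s)
          have h2 : 4 * (s:ℝ) * N ≤ ρ * a := by
            calc 4 * (s:ℝ) * N ≤ ρ * Γ * N := by gcongr
              _ = ρ * (N * Γ) := by ring
              _ ≤ _ := by gcongr
          have h3 : ρ * a < ρ * E := by gcongr
          have h4 : (j:ℝ) * N ≤ s * N := by gcongr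
          linarith
        have := mul_lt_mul_of_pos_left hjN hm0
        nlinarith
      obtain ⟨w, hw, hwm⟩ := key
      rw [mem_sdiff] at hw
      refine ⟨insert w L, insert_subset hw.1 hL, L'.filter (fun u => A u w = 1),
        (filter_subset _ _).trans hL', by rw [card_insert_of_notMem hw.2, hc], ?_, ?_⟩
      · intro w' hw' u hu
        rw [mem_filter] at hu
        rcases mem_insert.1 hw' with rfl | h
        · exact hu.2
        · exact hadj w' h u hu.1
      · refine le_trans ?_ hwm
        rw [pow_succ]
        nlinarith
  obtain ⟨L, hL, L', hL', hc, hadj, hm⟩ := greedy s le_rfl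
  have hL'S : L' ⊆ Sm := hL'.trans (filter_subset _ _)
  refine ⟨L, hL, L', hL'S.trans (filter_subset _ _), hc, ?_, hadj⟩
  have h1 : ∑ u ∈ L', x u ^2 ≤ L'.card * β := by
    have := sum_le_card_nsmul L' (fun u => x u ^2) β (fun u hu => by
      have := hL'S hu; rw [hSm, mem_filter] at this; exact this.2)
    simpa using this
  have h2 : (ρ/2) * (ρ/4)^s ≤ L'.card * β := hm.trans h1
  have h3 : (t:ℝ) ≤ L'.card := by
    have h4 : (ρ/2) * (ρ/4)^s * a ≤ L'.card * (4 * N) := by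
      have := mul_le_mul_of_nonneg_right h2 ha0.le
      rw [hβ] at this
      calc _ ≤ _ := this
        _ = _ := by field_simp
    have h5 : (ρ/2) * (ρ/4)^s * (N * Γ) ≤ (ρ/2) * (ρ/4)^s * a := by gcongr
    have h6 : (ρ/8) * (ρ/4)^s * Γ * (4 * N) ≤ L'.card * (4 * N) := by nlinarith
    exact hΓ2.trans (le_of_mul_le_mul_right h6 (by positivity))
  exact_mod_cast h3

lemma op_lemma (A : α → α → ℝ) (hA : ∀ u w, A u w = 0 ∨ A u w = 1) (U W : Finset α)
    (N ρ a Γ : ℝ) (s t : ℕ) (hN : 0 < N) (hU : (U.card : ℝ) ≤ N) (hW : (W.card : ℝ) ≤ N)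
    (hρ : 0 < ρ) (ha0 : 0 < a) (ha : 4 * ρ * (∑ w ∈ W, ∑ u ∈ U, A u w) ≤ a) (haN : N * Γ ≤ a)
    (hΓ1 : 4 * s ≤ ρ * Γ) (hΓ2 : (t:ℝ) ≤ (ρ/8) * (ρ/4)^s * Γ)
    (hno : ¬ ∃ L ⊆ W, ∃ L' ⊆ U, L.card = s ∧ t ≤ L'.card ∧ ∀ w ∈ L, ∀ u ∈ L', A u w = 1)
    (x : α → ℝ) : ∑ w ∈ W, (∑ u ∈ U, A u w * x u)^2 ≤ a * ∑ u ∈ U, x u ^2 := by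
  by_contra hcon
  push Not at hcon
  apply hno
  set n := ∑ u ∈ U, x u ^2 with hn
  have hn0 : 0 ≤ n := sum_nonneg fun _ _ => sq_nonneg _
  rcases hn0.eq_or_lt with h0 | h0
  · exfalso
    have hx : ∀ u ∈ U, x u = 0 := fun u hu => by
      have := (sum_eq_zero_iff_of_nonneg (fun u _ => sq_nonneg (x u))).1 h0.symm u hu
      simpa using this
    have : ∑ w ∈ W, (∑ u ∈ U, A u w * x u)^2 = 0 := by
      refine sum_eq_zero fun w _ => ?_
      rw [sum_eq_zero fun u hu => by rw [hx u hu, mul_zero]]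
      norm_num
    rw [this, ← h0] at hcon
    simp at hcon
  · refine op_core A hA U W N ρ a Γ s t hN hU hW hρ ha0 ha haN hΓ1 hΓ2 (fun u => x u / √n) ?_ ?_
    · simp only [div_pow, Real.sq_sqrt hn0]
      rw [← sum_div, ← hn, div_self h0.ne']
    · simp only [← mul_div_assoc, ← sum_div, div_pow, Real.sq_sqrt hn0]
      rwa [lt_div_iff₀ h0]
end helpers

section helpers
set_option linter.unusedSectionVars false
variable {α : Type*} [DecidableEq α]

/-- adjacency matrix -/
def adj (G : Finset (Finset α)) (u w : α) : ℝ := if ({u, w} : Finset α) ∈ G then 1 else 0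

lemma adj_or (G : Finset (Finset α)) (u w : α) : adj G u w = 0 ∨ adj G u w = 1 := by
  unfold adj; split_ifs <;> simp

lemma adj_eq_one {G : Finset (Finset α)} {u w : α} (h : adj G u w = 1) :
    ({u, w} : Finset α) ∈ G := by
  unfold adj at h; by_contra hc; rw [if_neg hc] at h; norm_num at h

lemma double_count (V : Finset α) (G : Finset (Finset α)) (hG : ∀ e ∈ G, e ⊆ V ∧ e.card = 2)
    (f : α → ℝ) : ∑ u ∈ V, ∑ w ∈ V, adj G u w * (f u * f w) = 2 * ∑ e ∈ G, ∏ v ∈ e, f v := by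
  have h1 : ∀ u w, adj G u w * (f u * f w) =
      ∑ e ∈ G, if ({u, w} : Finset α) = e then f u * f w else 0 := by
    intro u w
    unfold adj
    rw [sum_ite_eq]
    split_ifs <;> simp
  simp only [h1]
  have h2 : ∑ u ∈ V, ∑ w ∈ V, (∑ e ∈ G, if ({u, w} : Finset α) = e then f u * f w else 0) =
     ∑ e ∈ G, ∑ u ∈ V, ∑ w ∈ V, if ({u, w} : Finset α) = e then f u * f w else 0 := by
    rw [sum_comm]
    have : ∀ w ∈ V, ∑ u ∈ V, (∑ e ∈ G, if ({u, w} : Finset α) = e then f u * f w else 0) =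
      ∑ e ∈ G, ∑ u ∈ V, if ({u, w} : Finset α) = e then f u * f w else 0 := fun w _ => sum_comm
    rw [sum_congr rfl this, sum_comm]
    exact sum_congr rfl fun e _ => sum_comm
  rw [h2, mul_sum]
  refine sum_congr rfl fun e he => ?_
  obtain ⟨heV, hc⟩ := hG e he
  obtain ⟨a, b, hab, rfl⟩ := card_eq_two.1 hc
  have ha : a ∈ V := heV (by simp)
  have hb : b ∈ V := heV (by simp)
  have h3 : ∀ u w, (if ({u, w} : Finset α) = {a, b} then f u * f w else 0) =
      (if a = u then (if b = w then f u * f w else 0) else 0) +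
      (if b = u then (if a = w then f u * f w else 0) else 0) := by
    intro u w
    have : ({u, w} : Finset α) = {a, b} ↔ (a = u ∧ b = w) ∨ (b = u ∧ a = w) := by
      constructor
      · intro h
        have e1 : u ∈ ({a, b} : Finset α) := h ▸ (by simp)
        have e2 : w ∈ ({a, b} : Finset α) := h ▸ (by simp)
        have e3 : a ∈ ({u, w} : Finset α) := h ▸ (by simp)
        have e4 : b ∈ ({u, w} : Finset α) := h ▸ (by simp)
        simp only [mem_insert, mem_singleton] at e1 e2 e3 e4
        grind
      · rintro (⟨rfl, rfl⟩ | ⟨rfl, rfl⟩)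
        · rfl
        · exact pair_comm _ _
    by_cases c1 : a = u ∧ b = w
    · obtain ⟨rfl, rfl⟩ := c1
      simp [hab.symm]
    · by_cases c2 : b = u ∧ a = w
      · obtain ⟨rfl, rfl⟩ := c2
        simp [this, hab]
      · rw [if_neg (by rw [this]; tauto)]
        have t1 : (if a = u then (if b = w then f u * f w else 0) else 0) = 0 := by
          rw [← ite_and, if_neg c1]
        have t2 : (if b = u then (if a = w then f u * f w else 0) else 0) = 0 := by
          rw [← ite_and, if_neg c2]
        rw [t1, t2, add_zero]
  simp only [h3, sum_add_distrib]
  have s1 : ∑ u ∈ V, ∑ w ∈ V, (if a = u then (if b = w then f u * f w else 0) else 0) = f a * f b := by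
    rw [sum_eq_single a (fun u _ hu => by simp [hu.symm]) (fun h => absurd ha h)]
    rw [sum_eq_single b (fun u _ hu => by simp [hu.symm]) (fun h => absurd hb h)]
    simp
  have s2 : ∑ u ∈ V, ∑ w ∈ V, (if b = u then (if a = w then f u * f w else 0) else 0) = f b * f a := by
    rw [sum_eq_single b (fun u _ hu => by simp [hu.symm]) (fun h => absurd hb h)]
    rw [sum_eq_single a (fun u _ hu => by simp [hu.symm]) (fun h => absurd ha h)]
    simp
  rw [s1, s2, prod_pair hab]; ring

lemma EE_sg {V : Finset α} {u : α} (hu : u ∈ V) : EE V (fun c => sg c u) = 0 := by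
  have := EE_flip hu (fun c => sg c u)
  simp only [sg_flip_self] at this
  have h2 := EE_mul V (-1) (fun c => sg c u)
  simp only [neg_one_mul] at h2
  linarith

lemma EE_sg2 {V : Finset α} {u w : α} (hu : u ∈ V) (huw : w ≠ u) :
    EE V (fun c => sg c u * sg c w) = 0 := by
  have := EE_flip hu (fun c => sg c u * sg c w)
  simp only [sg_flip_self, sg_flip_ne _ huw] at this
  have h2 := EE_mul V (-1) (fun c => sg c u * sg c w)
  simp only [neg_one_mul] at h2
  simp only [neg_mul] at this
  linarith

/-- decoupled form -/
noncomputable def HH (V : Finset α) (G : Finset (Finset α)) (c S : Finset α) : ℝ :=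
  ∑ u ∈ c, sg S u * lf (adj G) (V \ c) S u

lemma HH_eq {V : Finset α} (G : Finset (Finset α)) {c : Finset α} (hc : c ⊆ V) (S : Finset α) :
    HH V G c S = ∑ u ∈ V, ∑ w ∈ V,
      adj G u w * (sg S u * sg S w) * ((1 - sg c u)/2 * ((1 + sg c w)/2)) := by
  unfold HH lf
  have h1 : ∀ g : α → ℝ, ∑ u ∈ c, g u = ∑ u ∈ V, g u * ((1 - sg c u)/2) := by
    intro g
    rw [← sum_subset hc (fun u _ hu => by simp [sg, hu])]
    exact sum_congr rfl fun u hu => by simp [sg, hu]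
  have h2 : ∀ g : α → ℝ, ∑ w ∈ V \ c, g w = ∑ w ∈ V, g w * ((1 + sg c w)/2) := by
    intro g
    rw [← sum_subset (sdiff_subset : V \ c ⊆ V) (fun u hu hu' => by
      have : u ∈ c := by
        by_contra h; exact hu' (mem_sdiff.2 ⟨hu, h⟩)
      simp [sg, this])]
    exact sum_congr rfl fun u hu => by simp [sg, (mem_sdiff.1 hu).2]
  rw [h1]
  refine sum_congr rfl fun u _ => ?_
  rw [h2, mul_sum, sum_mul]
  exact sum_congr rfl fun w _ => by ring

lemma EE_HH {V : Finset α} (G : Finset (Finset α)) (hG : ∀ e ∈ G, e ⊆ V ∧ e.card = 2)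
    (S : Finset α) : EE V (fun c => HH V G c S) = FF G S / 2 := by
  rw [EE_congr (fun c hc => HH_eq G hc S), EE_sum]
  have : ∀ u ∈ V, EE V (fun c => ∑ w ∈ V,
      adj G u w * (sg S u * sg S w) * ((1 - sg c u)/2 * ((1 + sg c w)/2))) =
      (1/4) * ∑ w ∈ V, adj G u w * (sg S u * sg S w) := by
    intro u hu
    rw [EE_sum, mul_sum]
    refine sum_congr rfl fun w hw => ?_
    rw [EE_mul]
    by_cases huw : w = u
    · have : adj G u w = 0 := by
        unfold adj
        rw [if_neg]
        intro h
        have := (hG _ h).2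
        rw [huw] at this
        simp at this
      rw [this]; simp
    · have e : (fun c => (1 - sg c u)/2 * ((1 + sg c w)/2)) = fun c =>
        (1/4 + (-1/4) * sg c u) + ((1/4) * sg c w + (-1/4) * (sg c u * sg c w)) := by
        funext c; ring
      rw [e, EE_add, EE_add, EE_add, EE_mul, EE_mul, EE_mul, EE_const, EE_sg hu, EE_sg hw,
        EE_sg2 hu huw]
      ring
  rw [sum_congr rfl this, ← mul_sum, double_count V G hG, FF]
  ring

lemma EE_comm (U V : Finset α) (f : Finset α → Finset α → ℝ) :
    EE U (fun S => EE V (fun c => f S c)) = EE V (fun c => EE U (fun S => f S c)) := by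
  unfold EE
  simp only [sum_div]
  rw [sum_comm]
  exact sum_congr rfl fun _ _ => sum_congr rfl fun _ _ => by ring

lemma EE_jensen (V : Finset α) (f : Finset α → ℝ) (p : ℕ) :
    (EE V f)^(2*p) ≤ EE V (fun S => f S ^(2*p)) := by
  have := Real.pow_arith_mean_le_arith_mean_pow_of_even V.powerset (fun _ => ((2:ℝ)^V.card)⁻¹) f
    (fun _ _ => by positivity) (by simp [card_powerset]) (even_two_mul p)
  unfold EE
  rw [← mul_sum, ← mul_sum] at this
  rw [div_eq_inv_mul, div_eq_inv_mul]
  exact this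

lemma HH_bound {V : Finset α} (G : Finset (Finset α)) {c : Finset α} (hc : c ⊆ V) {a : ℝ}
    (ha : 0 ≤ a) {p : ℕ} (hp : 0 < p)
    (hop : ∀ x : α → ℝ, ∑ w ∈ V \ c, (∑ u ∈ c, adj G u w * x u)^2 ≤ a * ∑ u ∈ c, x u ^ 2) :
    EE V (fun S => HH V G c S ^ (2*p)) ≤
      (4 * p * ((∑ w ∈ V \ c, ∑ u ∈ c, adj G u w ^ 2) + 16 * p * a))^p := by
  have hV : V = (V \ c) ∪ c := (sdiff_union_of_subset hc).symm
  have e : EE V (fun S => HH V G c S ^ (2*p)) =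
      EE (V \ c) (fun S => EE c (fun S' => HH V G c (S ∪ S') ^ (2*p))) := by
    conv_lhs => rw [hV]
    rw [EE_union _ _ sdiff_disjoint]
    rw [← hV]
  rw [e]
  calc _ ≤ EE (V \ c) (fun S => (4 * p)^p * ZZ (adj G) c (V \ c) S ^ p) := by
        refine EE_mono fun S hS => ?_
        have := khinchine hp c (fun u => lf (adj G) (V \ c) S u)
        rw [mul_pow] at this
        refine le_trans (le_of_eq ?_) this
        refine EE_congr fun S' hS' => ?_
        congr 1
        unfold HH lf
        refine sum_congr rfl fun u hu => ?_
        congr 1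
        · have : u ∉ S := fun h => (mem_sdiff.1 (hS h)).2 hu
          simp [sg, this]
        · refine sum_congr rfl fun w hw => ?_
          congr 1
          have : w ∉ S' := fun h => (mem_sdiff.1 hw).2 (hS' h)
          simp [sg, this]
    _ ≤ _ := by
        rw [EE_mul, mul_pow (4 * (p:ℝ))]
        gcongr
        exact ZZ_mom (adj G) c (V \ c) ha p hop p le_rfl

lemma graph_lemma {V : Finset α} (G : Finset (Finset α)) (hG : ∀ e ∈ G, e ⊆ V ∧ e.card = 2)
    {p : ℕ} (hp : 0 < p) (N ρ Γ : ℝ) (s t : ℕ) (hN : 0 < N) (hV : (V.card:ℝ) ≤ N)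
    (hρ : 0 < ρ) (hΓ : 0 < Γ)
    (hΓ1 : 4 * s ≤ ρ * Γ) (hΓ2 : (t:ℝ) ≤ (ρ/8) * (ρ/4)^s * Γ)
    (hno : ¬ ∃ L ⊆ V, ∃ L' ⊆ V, Disjoint L L' ∧ L.card = s ∧ t ≤ L'.card ∧
      ∀ w ∈ L, ∀ u ∈ L', ({u, w} : Finset α) ∈ G) :
    EE V (fun S => FF G S ^ (2*p)) ≤
      ((32 * p + 2048 * p^2 * ρ) * G.card + 256 * p^2 * (N * Γ))^p := by
  set a := 8 * ρ * G.card + N * Γ with ha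
  have ha0 : 0 < a := by positivity
  have hcard : ∑ u ∈ V, ∑ w ∈ V, adj G u w = 2 * G.card := by
    have := double_count V G hG (fun _ => 1)
    simpa using this
  have hadj0 : ∀ u w, 0 ≤ adj G u w := fun u w => by rcases adj_or G u w with h | h <;> rw [h]; norm_num
  have hadj2 : ∀ u w, adj G u w ^ 2 = adj G u w := fun u w => by
    rcases adj_or G u w with h | h <;> rw [h] <;> norm_num
  have hT : ∀ c ⊆ V, ∑ w ∈ V \ c, ∑ u ∈ c, adj G u w ≤ 2 * G.card := by
    intro c hc
    rw [← hcard, sum_comm]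
    calc _ ≤ ∑ u ∈ c, ∑ w ∈ V, adj G u w :=
          sum_le_sum fun u _ => sum_le_sum_of_subset_of_nonneg sdiff_subset fun _ _ _ => hadj0 _ _
      _ ≤ _ := sum_le_sum_of_subset_of_nonneg hc fun _ _ _ => sum_nonneg fun _ _ => hadj0 _ _
  have hbd : ∀ c ⊆ V, EE V (fun S => HH V G c S ^ (2*p)) ≤
      (4 * p * (2 * G.card + 16 * p * a))^p := by
    intro c hc
    have hcV : (c.card : ℝ) ≤ N := le_trans (by exact_mod_cast card_le_card hc) hV
    have hcV' : ((V \ c).card : ℝ) ≤ N := le_trans (by exact_mod_cast card_le_card sdiff_subset) hV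
    have hop := op_lemma (adj G) (adj_or G) c (V \ c) N ρ a Γ s t hN hcV hcV' hρ ha0
      (by
        have h1 : (0:ℝ) ≤ N * Γ := by positivity
        have h2 := mul_le_mul_of_nonneg_left (hT c hc) (by positivity : (0:ℝ) ≤ 4 * ρ)
        rw [ha]; linarith)
      (by
        have h1 : (0:ℝ) ≤ 8 * ρ * G.card := by positivity
        rw [ha]; linarith) hΓ1 hΓ2
      (by
        rintro ⟨L, hL, L', hL', h1, h2, h3⟩
        exact hno ⟨L, hL.trans sdiff_subset, L', hL'.trans hc,
          disjoint_of_subset_left hL (disjoint_of_subset_right hL' sdiff_disjoint), h1, h2,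
          fun w hw u hu => adj_eq_one (h3 w hw u hu)⟩)
    refine (HH_bound G hc ha0.le hp hop).trans ?_
    simp only [hadj2]
    have h0 : 0 ≤ ∑ w ∈ V \ c, ∑ u ∈ c, adj G u w := sum_nonneg fun _ _ => sum_nonneg fun _ _ => hadj0 _ _
    gcongr
    exact hT c hc
  calc EE V (fun S => FF G S ^ (2*p)) ≤
        EE V (fun S => 4^p * EE V (fun c => HH V G c S ^ (2*p))) := by
        refine EE_mono fun S _ => ?_
        have := EE_jensen V (fun c => HH V G c S) p
        rw [EE_HH G hG] at this
        calc FF G S ^ (2*p) = 4^p * (FF G S / 2)^(2*p) := by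
              rw [pow_mul, pow_mul, ← mul_pow]; congr 1; ring
          _ ≤ _ := by gcongr
    _ = 4^p * EE V (fun c => EE V (fun S => HH V G c S ^ (2*p))) := by
        rw [EE_mul, EE_comm]
    _ ≤ 4^p * (4 * p * (2 * G.card + 16 * p * a))^p := by
        gcongr
        have := EE_mono hbd
        rwa [EE_const] at this
    _ = _ := by
        rw [← mul_pow, ha]; congr 1; ring
end helpers



section helpers
set_option linter.unusedSectionVars false

lemma EE_prod_sg {α : Type*} [DecidableEq α] (V : Finset α) (m : α → ℕ) :
    0 ≤ EE V (fun S => ∏ v ∈ V, sg S v ^ m v) := by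
  unfold EE
  have h := prod_add (fun v => (-1:ℝ)^(m v)) (fun _ => 1) V
  have h2 : ∑ S ∈ V.powerset, ∏ v ∈ V, sg S v ^ m v = ∏ v ∈ V, ((-1:ℝ)^(m v) + 1) := by
    rw [h]
    refine sum_congr rfl fun S hS => ?_
    rw [mem_powerset] at hS
    rw [← prod_sdiff hS, mul_comm]
    congr 1
    · exact prod_congr rfl fun v hv => by simp [sg, hv]
    · exact prod_congr rfl fun v hv => by simp [sg, (mem_sdiff.1 hv).2]
  rw [h2]
  apply div_nonneg _ (by positivity)
  refine prod_nonneg fun v _ => ?_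
  rcases neg_one_pow_eq_or ℝ (m v) with h | h <;> rw [h] <;> norm_num

lemma energy_le {n d p : ℕ} (Λ Q : Finset (Fin n → ZMod 2)) (hΛ : InLambdaFamily (2 * d * p) Λ)
    (e : (Fin n → ZMod 2) → Finset (Fin n → ZMod 2))
    (he : ∀ q ∈ Q, e q ⊆ Λ ∧ (e q).card = d ∧ ∑ x ∈ e q, x = q) :
    (addEnergy p Q : ℝ) ≤ EE Λ (fun S => FF (Q.image e) S ^ (2*p)) := by
  have hinj : Set.InjOn e Q := by
    intro q hq q' hq' h
    rw [← (he q hq).2.2, ← (he q' hq').2.2, h]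
  set χ : Finset (Fin n → ZMod 2) → (Fin n → ZMod 2) → ℝ := fun S q => ∏ v ∈ e q, sg S v with hχ
  set PP := Fintype.piFinset fun _ : Fin p => Q with hPP
  have hF : ∀ S, FF (Q.image e) S ^ (2*p) =
      ∑ v ∈ PP ×ˢ PP, (∏ i, χ S (v.1 i)) * (∏ i, χ S (v.2 i)) := by
    intro S
    have h1 : FF (Q.image e) S = ∑ q ∈ Q, χ S q := by
      unfold FF; rw [sum_image hinj]
    have h2 : (∑ q ∈ Q, χ S q)^p = ∑ f ∈ PP, ∏ i, χ S (f i) := by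
      rw [hPP, ← prod_univ_sum]; simp
    rw [h1, two_mul, pow_add, h2, sum_mul_sum, sum_product]
  set m : (Fin p → (Fin n → ZMod 2)) → (Fin n → ZMod 2) → ℕ :=
    fun f v => (univ.filter (fun i => v ∈ e (f i))).card with hm
  have hprod : ∀ S, ∀ f ∈ PP, ∏ i, χ S (f i) = ∏ v ∈ Λ, sg S v ^ m f v := by
    intro S f hf
    rw [hPP, Fintype.mem_piFinset] at hf
    have : ∀ i, χ S (f i) = ∏ v ∈ Λ, if v ∈ e (f i) then sg S v else 1 := by
      intro i
      rw [prod_ite_mem, inter_eq_right.2 (he _ (hf i)).1]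
    simp only [this]
    rw [prod_comm]
    refine prod_congr rfl fun v _ => ?_
    rw [← prod_filter, prod_const]
  have hsum : ∀ f ∈ PP, ∑ i, f i = ∑ v ∈ Λ, m f v • v := by
    intro f hf
    rw [hPP, Fintype.mem_piFinset] at hf
    have : ∀ i, f i = ∑ v ∈ Λ, if v ∈ e (f i) then v else 0 := by
      intro i
      rw [sum_ite_mem, inter_eq_right.2 (he _ (hf i)).1, (he _ (hf i)).2.2]
    calc ∑ i, f i = ∑ i, ∑ v ∈ Λ, if v ∈ e (f i) then v else 0 := sum_congr rfl fun i _ => this i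
      _ = _ := by
        rw [sum_comm]
        refine sum_congr rfl fun v _ => ?_
        rw [← sum_filter, sum_const]
  have hcnt : ∀ f ∈ PP, ∑ v ∈ Λ, m f v = p * d := by
    intro f hf
    rw [hPP, Fintype.mem_piFinset] at hf
    have : ∀ i, d = ∑ v ∈ Λ, if v ∈ e (f i) then 1 else 0 := by
      intro i
      rw [sum_ite_mem, inter_eq_right.2 (he _ (hf i)).1, ← (he _ (hf i)).2.1]; simp
    calc ∑ v ∈ Λ, m f v = ∑ v ∈ Λ, ∑ i, if v ∈ e (f i) then 1 else 0 := by
          refine sum_congr rfl fun v _ => ?_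
          rw [hm]; simp
      _ = ∑ i : Fin p, d := by
          rw [sum_comm]
          exact sum_congr rfl fun i _ => (this i).symm
      _ = _ := by simp
  simp only [hF]
  rw [EE_sum]
  unfold _root_.addEnergy
  rw [card_eq_sum_ones, Nat.cast_sum]
  have hterm : ∀ v ∈ PP ×ˢ PP, EE Λ (fun S => (∏ i, χ S (v.1 i)) * (∏ i, χ S (v.2 i))) =
      EE Λ (fun S => ∏ w ∈ Λ, sg S w ^ (m v.1 w + m v.2 w)) := by
    intro v hv
    rw [mem_product] at hv
    refine EE_congr fun S _ => ?_
    rw [hprod S _ hv.1, hprod S _ hv.2, ← prod_mul_distrib]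
    exact prod_congr rfl fun w _ => (pow_add _ _ _).symm
  rw [← hPP]
  refine le_trans ?_ (sum_le_sum_of_subset_of_nonneg (filter_subset (fun v => ∑ i, v.1 i = ∑ i, v.2 i) (PP ×ˢ PP)) ?_)
  · refine sum_le_sum fun v hv => ?_
    rw [mem_filter] at hv
    rw [hterm v hv.1]
    have hv1 := mem_product.1 hv.1
    have heven : ∀ w ∈ Λ, Even (m v.1 w + m v.2 w) := by
      set O := Λ.filter (fun w => ¬ Even (m v.1 w + m v.2 w)) with hO
      have hOe : O = ∅ := by
        by_contra hne
        refine hΛ O (filter_subset _ _) (nonempty_iff_ne_empty.2 hne) ?_ ?_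
        · calc O.card = ∑ w ∈ O, 1 := card_eq_sum_ones _
            _ ≤ ∑ w ∈ O, (m v.1 w + m v.2 w) := by
                refine sum_le_sum fun w hw => ?_
                rw [hO, mem_filter] at hw
                rcases Nat.eq_zero_or_pos (m v.1 w + m v.2 w) with h | h
                · rw [h] at hw; simp at hw
                · exact h
            _ ≤ ∑ w ∈ Λ, (m v.1 w + m v.2 w) := sum_le_sum_of_subset (filter_subset _ _)
            _ = 2 * d * p := by
                rw [sum_add_distrib, hcnt _ hv1.1, hcnt _ hv1.2]; ring
        · have two : ∀ x : Fin n → ZMod 2, x + x = 0 := fun x => by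
            funext i; exact CharTwo.add_self_eq_zero (x i)
          have h1 : ∑ w ∈ Λ, (m v.1 w + m v.2 w) • w = 0 := by
            simp only [add_smul]
            rw [sum_add_distrib, ← hsum _ hv1.1, ← hsum _ hv1.2, hv.2, two]
          rw [← h1, hO, sum_filter]
          refine sum_congr rfl fun w _ => ?_
          split_ifs with h
          · obtain ⟨k, hk⟩ := h
            rw [hk, add_smul, two]
          · obtain ⟨k, hk⟩ := Nat.not_even_iff_odd.1 h
            rw [hk, add_smul, mul_comm, mul_smul, two_smul, smul_add, two]; simp
      intro w hw
      by_contra h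
      have : w ∈ O := mem_filter.2 ⟨hw, h⟩
      rw [hOe] at this; simp at this
    have : ∀ S ⊆ Λ, ∏ w ∈ Λ, sg S w ^ (m v.1 w + m v.2 w) = 1 := by
      intro S _
      refine prod_eq_one fun w hw => ?_
      obtain ⟨k, hk⟩ := heven w hw
      rw [hk, pow_add, ← mul_pow, sg_sq, one_pow]
    rw [EE_congr this, EE_const]; simp
  · intro v hv _
    rw [hterm v hv]
    exact EE_prod_sg _ _

end helpers

section helpers
set_option linter.unusedSectionVars false

lemma num_X {K η q N M : ℝ} {p d : ℕ} (hK : 1 ≤ K) (hη0 : 0 < η) (hη : η ≤ 1 / 2)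
    (hd : 3 ≤ d) (hN : 2 ≤ N)
    (hpK : 2 ^ (50 + 8 * d) * K ^ d / η ≤ (p : ℝ))
    (hM : M = 2 ^ 13 * (8 * K) ^ (d - 1)) (Z : ℝ)
    (hQcard : (2 : ℝ) ^ ((60 + 50 * d : ℝ) + 2 / η) * M ^ 17 * K ^ (2 * d) *
        (p : ℝ) ^ 3 * ((d : ℝ) ^ d)⁻¹ * N ^ (d - 1) *
        max ((2 ^ 30 * M ^ 11 * p) ^ (η * p) * N ^ η * Real.logb 2 N) Z ≤ q) :
    (p : ℝ) ^ (4 * d) ≤ q * (d : ℝ) ^ d / (2 ^ (140 + 80 * d) * K ^ (3 * d) * N ^ (d - 1)) := by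
  have hK0 : 0 < K := by linarith
  have hKd : 1 ≤ K ^ d := one_le_pow₀ hK
  have hd0 : (0:ℝ) < d := by positivity
  have hηp : 4 * (d:ℝ) ≤ η * p := by
    rw [div_le_iff₀ hη0] at hpK
    have h1 : (d:ℝ) < 2 ^ d := by exact_mod_cast Nat.lt_two_pow_self
    have h2 : (4:ℝ) * 2 ^ d ≤ 2 ^ (50 + 8 * d) := by
      calc (4:ℝ) * 2 ^ d = 2 ^ (2 + d) := by rw [pow_add]; norm_num
        _ ≤ _ := pow_le_pow_right₀ (by norm_num) (by omega)
    have h3 : (2:ℝ) ^ (50 + 8 * d) * 1 ≤ 2 ^ (50 + 8 * d) * K ^ d := by gcongr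
    linarith
  have hp1 : (1:ℝ) ≤ p := by
    by_contra h
    have : p = 0 := by
      by_contra h0; exact h (by exact_mod_cast Nat.one_le_iff_ne_zero.2 h0)
    rw [this] at hηp; simp at hηp; linarith
  have hM1 : 1 ≤ M := by
    rw [hM]
    have : (1:ℝ) ≤ (8 * K) ^ (d - 1) := one_le_pow₀ (by linarith)
    linarith
  have hmax : (p : ℝ) ^ (4 * d) ≤
      max ((2 ^ 30 * M ^ 11 * p) ^ (η * p) * N ^ η * Real.logb 2 N) Z := by
    refine le_trans ?_ (le_max_left _ _)
    have h1 : (p:ℝ) ^ (4 * d) ≤ (2 ^ 30 * M ^ 11 * p) ^ (η * p) := by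
      calc (p:ℝ) ^ (4 * d) = (p:ℝ) ^ ((4 * d : ℕ) : ℝ) := (Real.rpow_natCast _ _).symm
        _ ≤ (p:ℝ) ^ (η * p) := Real.rpow_le_rpow_of_exponent_le hp1 (by push_cast; exact hηp)
        _ ≤ _ := by
          refine Real.rpow_le_rpow (by linarith) ?_ (by positivity)
          have : 1 ≤ M ^ 11 := one_le_pow₀ hM1
          nlinarith
    have h2 : 1 ≤ N ^ η := Real.one_le_rpow (by linarith) hη0.le
    have h3 : 1 ≤ Real.logb 2 N := by
      rw [Real.le_logb_iff_rpow_le (by norm_num) (by linarith)]; simpa using hN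
    have h0 : (0:ℝ) ≤ (p:ℝ) ^ (4 * d) := by positivity
    calc (p:ℝ) ^ (4 * d) = (p:ℝ) ^ (4 * d) * 1 * 1 := by ring
      _ ≤ _ := by gcongr
  have hR : (2:ℝ) ^ (60 + 50 * d) ≤ (2 : ℝ) ^ ((60 + 50 * d : ℝ) + 2 / η) := by
    rw [← Real.rpow_natCast]
    refine Real.rpow_le_rpow_of_exponent_le (by norm_num) ?_
    push_cast
    have : 0 < 2 / η := by positivity
    linarith
  have hMK : (2:ℝ) ^ (80 + 30 * d) * K ^ d ≤ M ^ 17 := by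
    rw [hM]
    have e1 : ((2:ℝ) ^ 13 * (8 * K) ^ (d - 1)) ^ 17 = 2 ^ (221 + 51 * (d - 1)) * K ^ (17 * (d - 1)) := by
      rw [show (8:ℝ) = 2 ^ 3 by norm_num, mul_pow, mul_pow, mul_pow, pow_add, ← pow_mul, ← pow_mul,
        ← pow_mul, ← pow_mul, show 3 * ((d - 1) * 17) = 51 * (d - 1) by ring,
        show (d - 1) * 17 = 17 * (d - 1) by ring]
      ring
    rw [e1]
    refine mul_le_mul (pow_le_pow_right₀ (by norm_num) (by omega))
      (pow_le_pow_right₀ hK (by omega)) (by positivity) (by positivity)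
  have hp3 : (1:ℝ) ≤ (p:ℝ) ^ 3 := one_le_pow₀ hp1
  rw [le_div_iff₀ (by positivity)]
  have key : (2:ℝ) ^ (60 + 50 * d) * (2 ^ (80 + 30 * d) * K ^ d) * K ^ (2 * d) * 1 *
      ((d : ℝ) ^ d)⁻¹ * N ^ (d - 1) * (p:ℝ) ^ (4 * d) ≤ q := by
    refine le_trans ?_ hQcard
    gcongr
  calc (p:ℝ) ^ (4 * d) * (2 ^ (140 + 80 * d) * K ^ (3 * d) * N ^ (d - 1))
      = ((2:ℝ) ^ (60 + 50 * d) * (2 ^ (80 + 30 * d) * K ^ d) * K ^ (2 * d) * 1 *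
      ((d : ℝ) ^ d)⁻¹ * N ^ (d - 1) * (p:ℝ) ^ (4 * d)) * (d:ℝ) ^ d := by
        rw [show 140 + 80 * d = (60 + 50 * d) + (80 + 30 * d) by ring,
          show 3 * d = d + 2 * d by ring, pow_add 2 (60 + 50 * d), pow_add K]
        field_simp
    _ ≤ _ := by gcongr

lemma num_final {K η X : ℝ} {p d s t : ℕ} (hK : 1 ≤ K) (hη0 : 0 < η) (hη : η ≤ 1 / 2)
    (hd : 3 ≤ d) (hp : 0 < p) (hpd : d ≤ p) (hX : (p : ℝ) ^ (4 * d) ≤ X)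
    (hs : s = ⌈Real.logb 2 X / (2 ^ 10 * Real.logb 2 (2 ^ 40 * 8 ^ d * K ^ d))⌉₊)
    (ht : t = ⌈(1 / (2 ^ 10 * (p : ℝ) ^ 2)) * X ^ η⌉₊) :
    2 * 4 ^ (d + 2) * (2 * (4 ^ (d + 6) * K ^ (d - 1)) ^ (s + 1) * max (s:ℝ) t) * K ^ (d - 1) *
      (d:ℝ) ^ d < X * (2 ^ (140 + 80 * d) * K ^ (3 * d)) := by
  have hK0 : 0 < K := by linarith
  have hp1 : (1:ℝ) ≤ p := by exact_mod_cast hp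
  have hX1 : 1 ≤ X := le_trans (one_le_pow₀ hp1) hX
  have hX0 : 0 < X := by linarith
  set Y := X ^ (1/4 : ℝ) with hY
  have hY1 : 1 ≤ Y := Real.one_le_rpow hX1 (by norm_num)
  have hY2 : Y ^ 2 = X ^ (1/2 : ℝ) := by
    rw [hY, ← Real.rpow_natCast, ← Real.rpow_mul hX0.le]; norm_num
  have hY4 : Y ^ 4 = X := by
    rw [hY, ← Real.rpow_natCast, ← Real.rpow_mul hX0.le]; norm_num
  have hdY : (d:ℝ) ^ d ≤ Y := by
    have h1 : ((d:ℝ) ^ d) ^ 4 ≤ Y ^ 4 := by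
      rw [hY4]
      refine le_trans ?_ hX
      rw [← pow_mul, mul_comm d 4]
      gcongr
    exact le_of_pow_le_pow_left₀ (by norm_num) (by linarith) h1
  set E : ℝ := 2 ^ 40 * 8 ^ d * K ^ d with hE
  set B : ℝ := 4 ^ (d + 6) * K ^ (d - 1) with hB
  have hB1 : 1 ≤ B := by
    have h1 : (1:ℝ) ≤ 4 ^ (d + 6) := one_le_pow₀ (by norm_num)
    have h2 : 1 ≤ K ^ (d - 1) := one_le_pow₀ hK
    nlinarith
  have hBE : B ≤ E := by
    rw [hB, hE]
    have : (4:ℝ) ^ (d + 6) ≤ 2 ^ 40 * 8 ^ d := by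
      rw [show (4:ℝ) = 2 ^ 2 by norm_num, show (8:ℝ) = 2 ^ 3 by norm_num, ← pow_mul, ← pow_mul, ← pow_add]
      exact pow_le_pow_right₀ (by norm_num) (by omega)
    have h2 : K ^ (d - 1) ≤ K ^ d := pow_le_pow_right₀ hK (by omega)
    gcongr
  have hE0 : 0 < E := by linarith
  have hlE : 1 ≤ Real.logb 2 E := by
    rw [Real.le_logb_iff_rpow_le (by norm_num) hE0, Real.rpow_one, hE]
    have h1 : (1:ℝ) ≤ 8 ^ d := one_le_pow₀ (by norm_num)
    have h2 : 1 ≤ K ^ d := one_le_pow₀ hK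
    calc (2:ℝ) ≤ 2 ^ 40 * 1 * 1 := by norm_num
      _ ≤ _ := by gcongr
  have hlX : 0 ≤ Real.logb 2 X := Real.logb_nonneg (by norm_num) hX1
  set y := Real.logb 2 X / (2 ^ 10 * Real.logb 2 E) with hy
  have hy0 : 0 ≤ y := by positivity
  have hsy : (s:ℝ) ≤ y + 1 := by rw [hs]; exact (Nat.ceil_lt_add_one hy0).le
  have hBy : B ^ y ≤ Y := by
    calc B ^ y ≤ E ^ y := Real.rpow_le_rpow (by linarith) hBE hy0
      _ = X ^ (1/1024 : ℝ) := by
        conv_lhs => rw [← Real.rpow_logb (b := 2) (by norm_num) (by norm_num) hE0]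
        conv_rhs => rw [← Real.rpow_logb (b := 2) (by norm_num) (by norm_num) hX0]
        rw [← Real.rpow_mul (by norm_num), ← Real.rpow_mul (by norm_num), hy]
        congr 1
        field_simp
        norm_num
      _ ≤ Y := Real.rpow_le_rpow_of_exponent_le hX1 (by norm_num)
  have hBs : B ^ (s + 1) ≤ B ^ 2 * Y := by
    calc B ^ (s+1) = B * B ^ (s:ℝ) := by rw [pow_succ, Real.rpow_natCast]; ring
      _ ≤ B * B ^ (y + 1) := by
        gcongr
      _ = B ^ 2 * B ^ y := by rw [Real.rpow_add (by linarith), Real.rpow_one]; ring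
      _ ≤ _ := by gcongr
  have hY21 : 1 ≤ Y ^ 2 := one_le_pow₀ hY1
  have hsY : (s:ℝ) ≤ 5 * Y ^ 2 := by
    have h1 : y ≤ Real.logb 2 X := by
      rw [hy]
      exact div_le_self hlX (by linarith)
    have h2 : Real.logb 2 X ≤ 4 * Y ^ 2 := by
      have h3 : Real.log (Y ^ 2) ≤ Y ^ 2 - 1 := Real.log_le_sub_one_of_pos (by positivity)
      have h4 : Real.log X = 2 * Real.log (Y ^ 2) := by
        rw [← hY4, Real.log_pow, Real.log_pow]; push_cast; ring
      have h5 := Real.log_two_gt_d9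
      rw [Real.logb, div_le_iff₀ (by linarith), h4]
      nlinarith
    linarith
  have htY : (t:ℝ) ≤ 5 * Y ^ 2 := by
    have h0 : 0 ≤ X ^ η := by positivity
    have h1 : (1 / (2 ^ 10 * (p : ℝ) ^ 2)) * X ^ η ≤ Y ^ 2 := by
      have h2 : (1 / (2 ^ 10 * (p : ℝ) ^ 2)) ≤ 1 := by
        rw [div_le_one (by positivity)]
        have : 1 ≤ (p:ℝ) ^ 2 := one_le_pow₀ hp1
        linarith
      calc _ ≤ 1 * X ^ η := by gcongr
        _ = X ^ η := one_mul _
        _ ≤ _ := by rw [hY2]; exact Real.rpow_le_rpow_of_exponent_le hX1 hη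
    have h3 := (Nat.ceil_lt_add_one (a := (1 / (2 ^ 10 * (p : ℝ) ^ 2)) * X ^ η) (by positivity)).le
    rw [← ht] at h3
    linarith
  have hmax : max (s:ℝ) t ≤ 5 * Y ^ 2 := max_le hsY htY
  have hmax0 : 0 ≤ max (s:ℝ) t := le_max_of_le_left (by positivity)
  calc 2 * 4 ^ (d + 2) * (2 * B ^ (s + 1) * max (s:ℝ) t) * K ^ (d - 1) * (d:ℝ) ^ d
      ≤ 2 * 4 ^ (d + 2) * (2 * (B ^ 2 * Y) * (5 * Y ^ 2)) * K ^ (d - 1) * Y := by gcongr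
    _ = (20 * 4 ^ (d + 2) * (4 ^ (d + 6)) ^ 2) * K ^ (3 * (d - 1)) * Y ^ 4 := by
        rw [hB, show 3 * (d - 1) = (d - 1) + (d - 1) + (d - 1) by ring, pow_add, pow_add]; ring
    _ ≤ (20 * 4 ^ (d + 2) * (4 ^ (d + 6)) ^ 2) * K ^ (3 * d) * X := by
        rw [hY4]
        have := pow_le_pow_right₀ hK (show 3 * (d - 1) ≤ 3 * d by omega)
        gcongr
    _ < 2 ^ (140 + 80 * d) * K ^ (3 * d) * X := by
        gcongr
        calc (20:ℝ) * 4 ^ (d + 2) * (4 ^ (d + 6)) ^ 2 < 2 ^ 5 * 4 ^ (d + 2) * (4 ^ (d + 6)) ^ 2 := by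
              gcongr; norm_num
          _ = 2 ^ (5 + 2 * (d + 2) + 4 * (d + 6)) := by
              rw [show (4:ℝ) = 2 ^ 2 by norm_num, ← pow_mul, ← pow_mul, ← pow_mul, ← pow_add, ← pow_add]
              congr 1; ring
          _ ≤ _ := pow_le_pow_right₀ (by norm_num) (by omega)
    _ = _ := by ring

end helpers


lemma num_end {K q X N m Γ ρ B A : ℝ} {p d s : ℕ} (hK : 1 ≤ K) (hd : 3 ≤ d) (hp : 0 < p)
    (hN0 : 0 < N) (hq00 : 0 ≤ q) (hρ0 : 0 < ρ) (hm0 : 0 < m)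
    (hpbig : 2 ^ (50 + 8 * d) * K ^ d ≤ (p:ℝ)) (hB : B = 4 ^ (d + 6) * K ^ (d - 1))
    (hρ : ρ = 4 / B) (hΓ : Γ = 2 * B ^ (s + 1) * m) (hΓ0 : 0 < Γ)
    (hfin : 2 * 4 ^ (d + 2) * (2 * B ^ (s + 1) * m) * K ^ (d - 1) *
      (d:ℝ) ^ d < X * (2 ^ (140 + 80 * d) * K ^ (3 * d)))
    (hQX' : q * (d:ℝ) ^ d = X * (2 ^ (140 + 80 * d) * K ^ (3 * d)) * N ^ (d - 1))
    (hT : (p : ℝ) ^ (d * p) * q ^ p / K ^ ((d - 1) * p) ≤ A)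
    (c : ℝ) (hc0 : 0 ≤ c) (hc : c ≤ q)
    (hA : A ≤ ((4 * p) ^ (d - 2) * ((32 * p + 2048 * p ^ 2 * ρ) * c +
        256 * p ^ 2 * (N * Γ) * N ^ (d - 2))) ^ p) : False := by
  have hK0 : 0 < K := by linarith
  have hp0 : (0:ℝ) < p := by exact_mod_cast hp
  have hle : ((p:ℝ) ^ d * q / K ^ (d - 1)) ^ p ≤
      ((4 * p) ^ (d - 2) * ((32 * p + 2048 * p ^ 2 * ρ) * q +
        256 * p ^ 2 * (N * Γ) * N ^ (d - 2))) ^ p := by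
    calc ((p:ℝ) ^ d * q / K ^ (d - 1)) ^ p =
        (p : ℝ) ^ (d * p) * q ^ p / K ^ ((d - 1) * p) := by
          rw [div_pow, mul_pow, pow_mul, pow_mul]
      _ ≤ _ := hT.trans (hA.trans ?_)
    gcongr
  obtain ⟨k, rfl⟩ : ∃ k, d = k + 2 := ⟨d - 2, by omega⟩
  simp only [Nat.add_sub_cancel, show k + 2 - 1 = k + 1 by omega] at hle hfin hQX' hB
  have hle2 := le_of_pow_le_pow_left₀ hp.ne' (by positivity) hle
  have hQX : q * ((k + 2 : ℕ):ℝ) ^ (k + 2) = X * (2 ^ (140 + 80 * (k + 2)) * K ^ (3 * (k + 2))) * N ^ (k + 1) := by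
    exact hQX'
  have hΓq : 2 * 4 ^ (k + 4) * Γ * K ^ (k + 1) * N ^ (k + 1) < q := by
    have h1 : 0 < ((k + 2 : ℕ):ℝ) ^ (k + 2) := by positivity
    refine lt_of_mul_lt_mul_right ?_ h1.le
    rw [hQX, hΓ]
    have := mul_lt_mul_of_pos_right hfin (show 0 < N ^ (k + 1) by positivity)
    calc _ = _ := by ring
      _ < _ := this
  have hq0 : 0 < q := lt_of_le_of_lt (by positivity) hΓq
  -- rewrite the main inequality
  have h3 : q ≤ (32 * 4 ^ k * K ^ (k + 1) / p + 2048 * 4 ^ k * K ^ (k + 1) * ρ) * q +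
      4 ^ (k + 4) * Γ * K ^ (k + 1) * N ^ (k + 1) := by
    rw [div_le_iff₀ (by positivity)] at hle2
    have h4 : (0:ℝ) < p ^ (k + 2) := by positivity
    refine le_of_mul_le_mul_left ?_ h4
    calc _ ≤ _ := hle2
      _ = _ := by
        rw [mul_pow, pow_add (p:ℝ) k 2, pow_add (4:ℝ) k 4, pow_succ N k]
        field_simp
        ring
  have h5 : 32 * 4 ^ k * K ^ (k + 1) / p ≤ 1 / 4 := by
    rw [div_le_iff₀ hp0]
    have e1 : (2:ℝ) ^ 7 * 4 ^ k ≤ 2 ^ (50 + 8 * (k + 2)) := by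
      rw [show (4:ℝ) = 2 ^ 2 by norm_num, ← pow_mul, ← pow_add]
      exact pow_le_pow_right₀ (by norm_num) (by omega)
    have e2 : K ^ (k + 1) ≤ K ^ (k + 2) := pow_le_pow_right₀ hK (by omega)
    have e3 : (2:ℝ) ^ 7 * 4 ^ k * K ^ (k + 1) ≤ 2 ^ (50 + 8 * (k + 2)) * K ^ (k + 2) := by gcongr
    linarith
  have h6 : 2048 * 4 ^ k * K ^ (k + 1) * ρ = 1 / 8 := by
    rw [hρ, hB, show k + 2 + 6 = k + 8 by ring]
    field_simp
    ring
  rw [h6] at h3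
  nlinarith

theorem stmt17 {n : ℕ} (K η : ℝ) (hK : 1 ≤ K) (hη0 : 0 < η) (hη : η ≤ 1 / 2)
    (p d : ℕ) (hp : 0 < p) (hd : 3 ≤ d)
    (Λ : Finset (Fin n → ZMod 2)) (hΛ : InLambdaFamily (2 * d * p) Λ)
    (Q : Finset (Fin n → ZMod 2)) (hQ : Q ⊆ dDot d Λ)
    (hΛcard : 8 * d ^ 2 ≤ Λ.card)
    (hpK : 2 ^ (50 + 8 * d) * K ^ d / η ≤ (p : ℝ))
    (hT : (p : ℝ) ^ (d * p) * (Q.card : ℝ) ^ p / K ^ ((d - 1) * p) ≤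
      (addEnergy p Q : ℝ))
    (M : ℝ) (hM : M = 2 ^ 13 * (8 * K) ^ (d - 1))
    (hplog : (p : ℝ) ≤ Real.logb 2 (Λ.card : ℝ) /
      Real.logb 2 (Real.logb 2 (Λ.card : ℝ)))
    (hQcard : (2 : ℝ) ^ ((60 + 50 * d : ℝ) + 2 / η) * M ^ 17 * K ^ (2 * d) *
        (p : ℝ) ^ 3 * ((d : ℝ) ^ d)⁻¹ * (Λ.card : ℝ) ^ (d - 1) *
        max ((2 ^ 30 * M ^ 11 * p) ^ (η * p) * (Λ.card : ℝ) ^ η *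
              Real.logb 2 (Λ.card : ℝ))
            (Real.exp (Real.logb 2 (2 ^ 30 * M ^ 20) *
              Real.logb 2 ((p : ℝ) * Real.logb 2 M / Real.logb 2 (p : ℝ)) /
              Real.logb 2 ((2 : ℝ) ^ (-25 : ℤ) * η * p / M)))
        ≤ (Q.card : ℝ)) :
    ∃ (L L' : Finset (Fin n → ZMod 2)) (lam : Fin (d - 2) → (Fin n → ZMod 2)),
      L ⊆ Λ ∧ L' ⊆ Λ ∧ (∀ i, lam i ∈ Λ) ∧
      L ∩ L' = ∅ ∧
      (∀ i, lam i ∉ L ∪ L') ∧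
      Real.logb 2 ((Q.card : ℝ) * (d : ℝ) ^ d /
          (2 ^ (140 + 80 * d) * K ^ (3 * d) * (Λ.card : ℝ) ^ (d - 1))) /
        (2 ^ 10 * Real.logb 2 (2 ^ 40 * 8 ^ d * K ^ d)) ≤ (L.card : ℝ) ∧
      (1 / (2 ^ 10 * (p : ℝ) ^ 2)) *
        ((Q.card : ℝ) * (d : ℝ) ^ d /
          (2 ^ (140 + 80 * d) * K ^ (3 * d) * (Λ.card : ℝ) ^ (d - 1))) ^ η ≤
        (L'.card : ℝ) ∧
      ∀ x ∈ L, ∀ y ∈ L', (∑ i, lam i) + x + y ∈ Q := by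
  have hK0 : 0 < K := by linarith
  have hKd : 1 ≤ K ^ d := one_le_pow₀ hK
  have hp1 : (1:ℝ) ≤ p := by exact_mod_cast hp
  have hp0 : (0:ℝ) < p := by linarith
  have hd0 : (0:ℝ) < d := by positivity
  have hN2 : (2:ℝ) ≤ Λ.card := by
    have : 2 ≤ Λ.card := by nlinarith
    exact_mod_cast this
  have hX := num_X hK hη0 hη hd hN2 hpK hM _ hQcard
  have hpbig : 2 ^ (50 + 8 * d) * K ^ d ≤ (p:ℝ) := by
    refine le_trans ?_ hpK
    rw [le_div_iff₀ hη0]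
    have : 0 < (2:ℝ) ^ (50 + 8 * d) * K ^ d := by positivity
    nlinarith
  have hpd : d ≤ p := by
    have h1 : (d:ℝ) < 2 ^ d := by exact_mod_cast Nat.lt_two_pow_self
    have h2 : (2:ℝ) ^ d ≤ 2 ^ (50 + 8 * d) := pow_le_pow_right₀ (by norm_num) (by omega)
    have h3 : (2:ℝ) ^ (50 + 8 * d) * 1 ≤ 2 ^ (50 + 8 * d) * K ^ d := by gcongr
    have : (d:ℝ) ≤ p := by linarith
    exact_mod_cast this
  set N : ℝ := (Λ.card : ℝ) with hN
  set X : ℝ := (Q.card : ℝ) * (d : ℝ) ^ d / (2 ^ (140 + 80 * d) * K ^ (3 * d) * N ^ (d - 1)) with hXdef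
  set s : ℕ := ⌈Real.logb 2 X / (2 ^ 10 * Real.logb 2 (2 ^ 40 * 8 ^ d * K ^ d))⌉₊ with hs
  set t : ℕ := ⌈(1 / (2 ^ 10 * (p : ℝ) ^ 2)) * X ^ η⌉₊ with ht
  have hfin := num_final hK hη0 hη hd hp hpd hX hs ht
  have hX0 : 0 < X := lt_of_lt_of_le (by positivity) hX
  have ht1 : 1 ≤ t := Nat.one_le_iff_ne_zero.2 (by
    have : 0 < (1 / (2 ^ 10 * (p : ℝ) ^ 2)) * X ^ η := by positivity
    exact (Nat.ceil_pos.2 this).ne')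
  set m : ℝ := max (s:ℝ) t with hm
  have hm0 : 0 < m := lt_of_lt_of_le (by exact_mod_cast ht1) (le_max_right _ _)
  set B : ℝ := 4 ^ (d + 6) * K ^ (d - 1) with hB
  have hB1 : 1 ≤ B := by
    have h1 : (1:ℝ) ≤ 4 ^ (d + 6) := one_le_pow₀ (by norm_num)
    have h2 : 1 ≤ K ^ (d - 1) := one_le_pow₀ hK
    nlinarith
  have hB0 : 0 < B := by linarith
  set ρ : ℝ := 4 / B with hρ
  set Γ : ℝ := 2 * B ^ (s + 1) * m with hΓ
  have hρ0 : 0 < ρ := by positivity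
  have hΓ0 : 0 < Γ := by positivity
  have hN0 : 0 < N := by linarith
  have hΓ1 : 4 * (s:ℝ) ≤ ρ * Γ := by
    have h1 : ρ * Γ = 8 * B ^ s * m := by rw [hρ, hΓ, pow_succ]; field_simp; ring
    have h2 : 1 ≤ B ^ s := one_le_pow₀ hB1
    have h3 : (s:ℝ) ≤ m := le_max_left _ _
    rw [h1]
    nlinarith
  have hΓ2 : (t:ℝ) ≤ (ρ / 8) * (ρ / 4) ^ s * Γ := by
    have h1 : (ρ / 8) * (ρ / 4) ^ s * Γ = m := by
      have : ρ / 4 = B⁻¹ := by rw [hρ]; field_simp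
      rw [this, hρ, hΓ, pow_succ, inv_pow]; field_simp; norm_num
    rw [h1]; exact le_max_right _ _
  have hex : ∀ q : Fin n → ZMod 2, ∃ e : Finset (Fin n → ZMod 2),
      q ∈ Q → e ⊆ Λ ∧ e.card = d ∧ ∑ x ∈ e, x = q := by
    intro q
    by_cases hq : q ∈ Q
    · obtain ⟨e, he, he2⟩ := mem_image.1 (hQ hq)
      rw [mem_powersetCard] at he
      exact ⟨e, fun _ => ⟨he.1, he.2, he2⟩⟩
    · exact ⟨∅, fun h => absurd h hq⟩
  choose e he using hex
  have hen := energy_le Λ Q hΛ e he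
  by_contra hcon
  have hch := chain hp (θ := 32 * p + 2048 * p ^ 2 * ρ) (γ := 256 * p ^ 2 * (N * Γ))
    (by positivity) (by positivity) (d - 2) Λ (Q.image e) (by
      intro f hf
      obtain ⟨q, hq, rfl⟩ := mem_image.1 hf
      exact ⟨(he q hq).1, by rw [(he q hq).2.1]; omega⟩) (by
      intro T W G hTV hWV hTW hTc hG
      refine graph_lemma G (fun f hf => ⟨(hG f hf).1, (hG f hf).2.1⟩) hp N ρ Γ s t hN0
        (by rw [hN]; exact_mod_cast card_le_card hWV) hρ0 hΓ0 hΓ1 hΓ2 ?_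
      rintro ⟨L, hL, L', hL', hdis, hLc, hLc', hLL⟩
      apply hcon
      refine ⟨L, L', fun i => (T.equivFinOfCardEq hTc).symm i, hL.trans hWV, hL'.trans hWV,
        fun i => hTV (Subtype.property _), disjoint_iff_inter_eq_empty.1 hdis, ?_, ?_, ?_, ?_⟩
      · intro i hi
        have h1 : ((T.equivFinOfCardEq hTc).symm i : Fin n → ZMod 2) ∈ T := Subtype.property _
        exact disjoint_left.1 hTW h1 ((union_subset hL hL') hi)
      · rw [hLc]; exact Nat.le_ceil _
      · exact (Nat.le_ceil _).trans (Nat.cast_le.2 hLc')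
      · intro x hx y hy
        have hxy : x ≠ y := fun h => disjoint_left.1 hdis hx (h ▸ hy)
        obtain ⟨hW, -, hTe⟩ := hG _ (hLL x hx y hy)
        obtain ⟨q, hq, hqe⟩ := mem_image.1 hTe
        have h1 : ∑ i, ((T.equivFinOfCardEq hTc).symm i : Fin n → ZMod 2) = ∑ v ∈ T, v := by
          rw [← sum_coe_sort T (fun v => v)]
          exact Equiv.sum_comp (T.equivFinOfCardEq hTc).symm (fun v => (v : Fin n → ZMod 2))
        have h2 : q = ∑ v ∈ T, v + x + y := by
          rw [← (he q hq).2.2, hqe, sum_union (disjoint_of_subset_right hW hTW),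
            sum_pair hxy.symm]
          abel
        rw [h1, ← h2]; exact hq)
  refine num_end hK hd hp hN0 (Nat.cast_nonneg _) hρ0 hm0 hpbig hB hρ hΓ hΓ0 hfin ?_ hT _
    (Nat.cast_nonneg _) (Nat.cast_le.2 card_image_le) (hen.trans hch)
  rw [hXdef]; field_simp
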